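/- For every ε with 0 < ε, ε² ≤ 1/2, and 1/ε a positive integer, there is a constant c > 0 and a deterministic online algorithm for scheduling jobs on a single machine which, on every instance J, rejects a set R of jobs with ∑_{j∈R} w_j ≤ c·ε·∑_{j∈J} w_j, schedules every job of J∖R non-preemptively, and achieves total weighted flow-time ∑_{j∉R} w_j·(C_j − r_j) ≤ (c/ε²)·F*, where F* is the minimum total weighted flow-time of any offline preemptive schedule that completes all jobs of J on a machine that may process (1+ε) units of work per slot. -/

import Mathlib

/-!
The algorithm sorts the jobs into density classes, the class of `j` being the integer `k` with
`4 ^ k ≤ w j / p j < 4 ^ (k + 1)`, and uses two rejection rules.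

* On arrival: in every class a job is rejected whenever a `theta ε` fraction of the volume
  seen so far, less the volume already rejected, pays for it, where
  `(1 - theta ε) * (1 + ε) = 1 - ε`. The volume rejected in a class is at most a
  `theta ε ≤ 2 * ε` fraction, so the weight is at most `8 * ε` of the total (`rej1_weight`).
* Interruption: the running job `j` is rejected once the jobs released since its start weigh
  more than `w j / ε`. Each job is charged by at most one interruption, which costs at most an
  `ε` fraction of the weight (`interrupted_weight`).

Whenever the machine is free, a waiting job of highest class is started.

For the flow-time, fix a threshold `k` and compare the volume `U k t` of class at least `k`
waiting in the online schedule with the volume `Y k t` left by the offline one. As long as the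
online machine works on class at least `k`, the online workload minus `(1 - theta ε) * Y`
decreases at rate `ε`, up to changes of the credit of the first rule (`workload_bound`). Such a busy phase
begins with nothing waiting, or behind a job `l` of lower class. In the second case the
volume that arrived since the start of `l` may be held up, and the offline schedule may have
finished it; by the second rule the excess of `U` over `Y` is at most `3 * p l`, and the decay
removes it after `O(p l / ε)` slots. The credit a class gains during the phase is at most the
size of its last retained job `j` (`cred_sum_diff`), and the decay, shared among the classes with
geometric weights, removes it within `O(p j * 2 ^ (cls j - k) / ε)` slots of the release of `j`.
This gives the pointwise bound `U_le`.

Multiplying by `4 ^ k` and summing over `k` turns volumes into weights, up to constant factors.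
The sum over time of the offline part is `O(F)` for the offline flow-time `F`
(`sum_Y_le`); the blocking part is `O(W / ε ^ 2)`, since the jobs released while `l` runs
weigh at most `w l / ε` (`sum_blocked_le`); the credit part is `O(W / ε)` (`sum_credit_le`).
Here `W = ∑ w j * p j`, and `W ≤ 2 * F` because the offline speed is at most `2`. The online
flow-time is at most `W` plus the waiting weight summed over time, whence `flow_le`.
-/

open Finset

noncomputable section

namespace NPSched

/-- A single-machine job instance: a finite set `J ⊆ ℕ` of jobs, each `j ∈ J` having
an integer release time `r j`, a positive integer size `p j`, and a positive real
weight `w j`. -/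
structure SInstance where
  J : Finset ℕ
  r : ℕ → ℕ
  p : ℕ → ℕ
  w : ℕ → ℝ
  hp : ∀ j ∈ J, 0 < p j
  hw : ∀ j ∈ J, 0 < w j

/-- The output of a scheduling algorithm: `sched t` is the job (if any) processed in
the unit slot `[t, t+1]`, and `rej j = some s` means job `j` is rejected at time `s`. -/
structure SOutput where
  sched : ℕ → Option ℕ
  rej : ℕ → Option ℕ

/-- Two instances agree up to time `t`: they contain the same jobs released by time
`t`, with identical release times, sizes and weights. -/
def SAgreeUpTo (I₁ I₂ : SInstance) (t : ℕ) : Prop :=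
  I₁.J.filter (fun j => I₁.r j ≤ t) = I₂.J.filter (fun j => I₂.r j ≤ t) ∧
  ∀ j ∈ I₁.J.filter (fun j => I₁.r j ≤ t),
    I₁.r j = I₂.r j ∧ I₁.p j = I₂.p j ∧ I₁.w j = I₂.w j

/-- A deterministic algorithm (a function from instances to outputs) is online if its
decisions up to any time `t` — the schedule in slots `[u, u+1]` for `u ≤ t` and the
rejections performed by time `t` — depend only on the jobs released by time `t`. -/
def SOnline (Alg : SInstance → SOutput) : Prop :=
  ∀ I₁ I₂ t, SAgreeUpTo I₁ I₂ t →
    (∀ u ≤ t, (Alg I₁).sched u = (Alg I₂).sched u) ∧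
    (∀ j, ∀ s ≤ t, ((Alg I₁).rej j = some s ↔ (Alg I₂).rej j = some s))

/-- The set of jobs of instance `I` rejected by the algorithm's output `out`. -/
def SRej (I : SInstance) (out : SOutput) : Finset ℕ :=
  I.J.filter fun j => out.rej j ≠ none

/-- An offline preemptive schedule on a machine of speed `1 + ε` (processing `1 + ε`
units of work of one released job per slot) that completes every job `j ∈ J` at time
`C j`: job `j` has accumulated `p j` units of work by time `C j`. -/
def SOffOK (I : SInstance) (ε : ℝ) (osched : ℕ → Option ℕ) (C : ℕ → ℕ) : Prop :=
  (∀ t j, osched t = some j → j ∈ I.J ∧ I.r j ≤ t) ∧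
  ∀ j ∈ I.J, I.r j ≤ C j ∧
    (I.p j : ℝ) ≤ (1 + ε) * ((Finset.range (C j)).filter fun t => osched t = some j).card

/-! ### The algorithm -/

section Algorithm
open scoped Classical

/-- The fraction of the volume of each density class that is rejected on arrival; it is
chosen so that `(1 - theta ε) * (1 + ε) = 1 - ε`. -/
def theta (ε : ℝ) : ℝ := 2 * ε / (1 + ε)

/-- The density class of a job: the integer `k` with `4 ^ k ≤ w / p < 4 ^ (k + 1)`. -/
def cls (I : SInstance) (j : ℕ) : ℤ := Int.log 4 (I.w j / I.p j)

/-- The jobs of the same class as `j` that arrive before `j`, simultaneous arrivals being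
ordered by index. -/
def pred (I : SInstance) (j : ℕ) : Finset ℕ :=
  I.J.filter fun i => cls I i = cls I j ∧ (I.r i < I.r j ∨ I.r i = I.r j ∧ i < j)

theorem mem_pred {I : SInstance} {i j : ℕ} : i ∈ pred I j ↔
    i ∈ I.J ∧ cls I i = cls I j ∧ (I.r i < I.r j ∨ I.r i = I.r j ∧ i < j) := by
  simp [pred]

theorem pred_lt {I : SInstance} {i j : ℕ} (h : i ∈ pred I j) :
    Prod.Lex (· < ·) (· < ·) (I.r i, i) (I.r j, j) := by
  rw [mem_pred] at h
  rcases h.2.2 with h | ⟨h, h'⟩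
  · exact Prod.Lex.left _ _ h
  · rw [h]; exact Prod.Lex.right _ h'

/-- Rejection on arrival. Every arrival of size `p` adds `theta ε * p` to the credit of its
class, and a job is rejected when the credit pays for its whole size, which is then
deducted. -/
def Rej1 (ε : ℝ) (I : SInstance) (j : ℕ) : Prop :=
  (I.p j : ℝ) ≤ theta ε * I.p j + ∑ i ∈ (pred I j).attach,
    (theta ε * I.p i - if Rej1 ε I i then (I.p i : ℝ) else 0)
termination_by (I.r j, j)
decreasing_by exact pred_lt i.2

/-- The contribution of job `i` to the credit of its class. -/
def cred (ε : ℝ) (I : SInstance) (i : ℕ) : ℝ :=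
  theta ε * I.p i - if Rej1 ε I i then (I.p i : ℝ) else 0

theorem rej1_iff (ε : ℝ) (I : SInstance) (j : ℕ) :
    Rej1 ε I j ↔ (I.p j : ℝ) ≤ theta ε * I.p j + ∑ i ∈ pred I j, cred ε I i := by
  rw [Rej1, ← Finset.sum_attach (pred I j)]
  rfl

theorem pred_induction (I : SInstance) {P : ℕ → Prop}
    (h : ∀ j, (∀ i ∈ pred I j, P i) → P j) (j : ℕ) : P j :=
  h j fun i _hi => pred_induction I h i
termination_by (I.r j, j)
decreasing_by exact pred_lt _hi

/-- The part of the instance known at time `t`, with all data of the other jobs erased. -/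
def trunc (I : SInstance) (t : ℕ) : SInstance where
  J := I.J.filter fun j => I.r j ≤ t
  r j := if j ∈ I.J ∧ I.r j ≤ t then I.r j else 0
  p j := if j ∈ I.J ∧ I.r j ≤ t then I.p j else 0
  w j := if j ∈ I.J ∧ I.r j ≤ t then I.w j else 0
  hp j hj := by
    rw [Finset.mem_filter] at hj
    rw [if_pos hj]; exact I.hp j hj.1
  hw j hj := by
    rw [Finset.mem_filter] at hj
    rw [if_pos hj]; exact I.hw j hj.1

/-- The state before a slot: the jobs started so far, and the job processed in the previous
slot (if any) with the time it was started. -/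
abbrev St := Finset ℕ × Option (ℕ × ℕ)

/-- The job processed last is neither finished at time `t` nor outweighed by the jobs that
arrived since its start. -/
def Cont (ε : ℝ) (I : SInstance) (t : ℕ) (x : Option (ℕ × ℕ)) : Prop :=
  ∃ j σ, x = some (j, σ) ∧ t < σ + I.p j ∧
    ∑ i ∈ I.J.filter (fun i => σ < I.r i), I.w i ≤ I.w j / ε

/-- The known jobs that were not rejected on arrival and are not in the set `D` of started
jobs. -/
def waiting (ε : ℝ) (I : SInstance) (D : Finset ℕ) : Finset ℕ :=
  I.J.filter fun j => ¬ Rej1 ε I j ∧ j ∉ D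

/-- A job of highest density class in `W`. -/
def pick (I : SInstance) (W : Finset ℕ) : ℕ :=
  if h : W.Nonempty then (Finset.exists_max_image W (cls I) h).choose else 0

/-- The decision at time `t`: continue the current job if possible, and otherwise start a
waiting job of highest density class. -/
def step (ε : ℝ) (I : SInstance) (t : ℕ) (S : St) : St :=
  if Cont ε I t S.2 then S
  else if (waiting ε I S.1).Nonempty then
    (insert (pick I (waiting ε I S.1)) S.1, some (pick I (waiting ε I S.1), t))
  else (S.1, none)

/-- The state before slot `t`; the decision for slot `t` uses only `trunc I t`. -/
def st (ε : ℝ) (I : SInstance) : ℕ → St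
  | 0 => (∅, none)
  | t + 1 => step ε (trunc I t) t (st ε I t)

/-- Job `j` is rejected at time `s`: on arrival, or because it is being processed,
unfinished, and outweighed by the jobs that arrived since its start. -/
def RejAt (ε : ℝ) (I : SInstance) (j s : ℕ) : Prop :=
  (j ∈ (trunc I s).J ∧ (trunc I s).r j = s ∧ Rej1 ε (trunc I s) j) ∨
  ∃ σ, (st ε I s).2 = some (j, σ) ∧ s < σ + (trunc I s).p j ∧
    (trunc I s).w j / ε <
      ∑ i ∈ (trunc I s).J.filter (fun i => σ < (trunc I s).r i), (trunc I s).w i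

/-- The online algorithm. -/
def alg (ε : ℝ) (I : SInstance) : SOutput where
  sched t := ((st ε I (t + 1)).2).map Prod.fst
  rej j := if h : ∃ s, RejAt ε I j s then some (Nat.find h) else none

/-! ### The algorithm is online -/

theorem trunc_eq_of_agree {I₁ I₂ : SInstance} {t u : ℕ} (h : SAgreeUpTo I₁ I₂ t)
    (hu : u ≤ t) : trunc I₁ u = trunc I₂ u := by
  obtain ⟨hJ, hv⟩ := h
  have key : ∀ j, (j ∈ I₁.J ∧ I₁.r j ≤ u) ↔ (j ∈ I₂.J ∧ I₂.r j ≤ u) := by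
    intro j
    have hj := Finset.ext_iff.1 hJ j
    have hvj := hv j
    simp only [Finset.mem_filter] at hj hvj
    constructor
    · rintro ⟨a, b⟩
      have h1 := hvj ⟨a, b.trans hu⟩
      have h2 := hj.1 ⟨a, b.trans hu⟩
      exact ⟨h2.1, by omega⟩
    · rintro ⟨a, b⟩
      have h2 := hj.2 ⟨a, b.trans hu⟩
      have h1 := hvj h2
      exact ⟨h2.1, by omega⟩
  have val : ∀ j, (j ∈ I₂.J ∧ I₂.r j ≤ u) →
      I₁.r j = I₂.r j ∧ I₁.p j = I₂.p j ∧ I₁.w j = I₂.w j := by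
    intro j hj
    have h1 := (key j).2 hj
    exact hv j (Finset.mem_filter.2 ⟨h1.1, h1.2.trans hu⟩)
  unfold trunc
  congr 1
  · ext j; simpa only [Finset.mem_filter] using key j
  · funext j; simp only [key]; split_ifs with hj
    · exact (val j hj).1
    · rfl
  · funext j; simp only [key]; split_ifs with hj
    · exact (val j hj).2.1
    · rfl
  · funext j; simp only [key]; split_ifs with hj
    · exact (val j hj).2.2
    · rfl

theorem st_eq_of_agree {ε : ℝ} {I₁ I₂ : SInstance} {t : ℕ} (h : SAgreeUpTo I₁ I₂ t) :
    ∀ u ≤ t + 1, st ε I₁ u = st ε I₂ u := by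
  intro u
  induction u with
  | zero => intro _; rfl
  | succ u ih =>
    intro hu
    simp only [st]
    rw [ih (by omega), trunc_eq_of_agree h (by omega : u ≤ t)]

theorem rej_eq_some {ε : ℝ} {I : SInstance} {j s : ℕ} :
    (alg ε I).rej j = some s ↔ RejAt ε I j s ∧ ∀ u < s, ¬ RejAt ε I j u := by
  unfold alg
  by_cases h : ∃ s, RejAt ε I j s
  · simp only [h, dite_true, Option.some.injEq]
    exact Nat.find_eq_iff h
  · simp only [h, dite_false]
    constructor
    · intro h'; cases h'
    · intro h'; exact absurd ⟨s, h'.1⟩ h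

theorem alg_online (ε : ℝ) : SOnline (alg ε) := by
  intro I₁ I₂ t h
  have hR : ∀ j, ∀ u ≤ t, (RejAt ε I₁ j u ↔ RejAt ε I₂ j u) := by
    intro j u hu
    unfold RejAt
    rw [trunc_eq_of_agree h hu, st_eq_of_agree h u (by omega)]
  refine ⟨fun u hu => ?_, fun j s hs => ?_⟩
  · simp only [alg]
    rw [st_eq_of_agree h (u + 1) (by omega)]
  · rw [rej_eq_some, rej_eq_some, hR j s hs]
    refine and_congr Iff.rfl (forall_congr' fun u => ?_)
    exact ⟨fun h hu => (hR j u (by omega)).not.1 (h hu),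
      fun h hu => (hR j u (by omega)).not.2 (h hu)⟩

/-! ### Decisions in terms of the full instance -/

section
variable {ε : ℝ} {I : SInstance} {t j : ℕ}

theorem mem_trunc : j ∈ (trunc I t).J ↔ j ∈ I.J ∧ I.r j ≤ t := Finset.mem_filter

theorem trunc_r (h : j ∈ I.J ∧ I.r j ≤ t) : (trunc I t).r j = I.r j := if_pos h

theorem trunc_p (h : j ∈ I.J ∧ I.r j ≤ t) : (trunc I t).p j = I.p j := if_pos h

theorem trunc_w (h : j ∈ I.J ∧ I.r j ≤ t) : (trunc I t).w j = I.w j := if_pos h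

theorem trunc_cls (h : j ∈ I.J ∧ I.r j ≤ t) : cls (trunc I t) j = cls I j := by
  rw [cls, cls, trunc_p h, trunc_w h]

theorem trunc_pred (h : j ∈ I.J ∧ I.r j ≤ t) : pred (trunc I t) j = pred I j := by
  ext i
  rw [mem_pred, mem_pred, mem_trunc, trunc_cls h, trunc_r h]
  constructor
  · rintro ⟨hi, h2⟩
    rw [trunc_cls hi, trunc_r hi] at h2
    exact ⟨hi.1, h2⟩
  · rintro ⟨hi, h2⟩
    have hi' : i ∈ I.J ∧ I.r i ≤ t := ⟨hi, by omega⟩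
    rw [trunc_cls hi', trunc_r hi']
    exact ⟨hi', h2⟩

theorem trunc_rej1 (h : j ∈ I.J ∧ I.r j ≤ t) : Rej1 ε (trunc I t) j ↔ Rej1 ε I j := by
  revert h
  refine pred_induction I (P := fun j => (j ∈ I.J ∧ I.r j ≤ t) →
    (Rej1 ε (trunc I t) j ↔ Rej1 ε I j)) (fun j ih h => ?_) j
  rw [rej1_iff, rej1_iff, trunc_p h, trunc_pred h]
  have : ∑ i ∈ pred I j, cred ε (trunc I t) i = ∑ i ∈ pred I j, cred ε I i := by
    refine Finset.sum_congr rfl fun i hi => ?_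
    have hi' := mem_pred.1 hi
    have hi2 : i ∈ I.J ∧ I.r i ≤ t := ⟨hi'.1, by omega⟩
    unfold cred
    rw [trunc_p hi2]
    simp only [ih i hi hi2]
  rw [this]

theorem trunc_sum (σ : ℕ) :
    ∑ i ∈ (trunc I t).J.filter (fun i => σ < (trunc I t).r i), (trunc I t).w i =
      ∑ i ∈ I.J.filter (fun i => σ < I.r i ∧ I.r i ≤ t), I.w i := by
  have : (trunc I t).J.filter (fun i => σ < (trunc I t).r i) =
      I.J.filter (fun i => σ < I.r i ∧ I.r i ≤ t) := by
    ext i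
    simp only [Finset.mem_filter, mem_trunc]
    constructor
    · rintro ⟨a, b⟩
      rw [trunc_r a] at b
      exact ⟨a.1, b, a.2⟩
    · rintro ⟨a, b, c⟩
      rw [trunc_r ⟨a, c⟩]
      exact ⟨⟨a, c⟩, b⟩
  rw [this]
  refine Finset.sum_congr rfl fun i hi => ?_
  simp only [Finset.mem_filter] at hi
  exact trunc_w ⟨hi.1, hi.2.2⟩

theorem mem_waiting {D : Finset ℕ} : j ∈ waiting ε (trunc I t) D ↔
    j ∈ I.J ∧ I.r j ≤ t ∧ ¬ Rej1 ε I j ∧ j ∉ D := by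
  unfold waiting
  rw [Finset.mem_filter, mem_trunc]
  constructor
  · rintro ⟨a, b, c⟩
    rw [trunc_rej1 a] at b
    exact ⟨a.1, a.2, b, c⟩
  · rintro ⟨a, b, c, d⟩
    rw [trunc_rej1 ⟨a, b⟩]
    exact ⟨⟨a, b⟩, c, d⟩

theorem pick_spec {W : Finset ℕ} (h : W.Nonempty) :
    pick I W ∈ W ∧ ∀ i ∈ W, cls I i ≤ cls I (pick I W) := by
  unfold pick
  rw [dif_pos h]
  exact (Finset.exists_max_image W (cls I) h).choose_spec

end

/-- The facts about the job `j` processed in the slot before `t` and started at `σ`: it was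
the densest waiting job at time `σ`, and up to the last slot it was neither finished nor
outweighed. -/
structure RunOK (ε : ℝ) (I : SInstance) (t j σ : ℕ) : Prop where
  lt : σ < t
  mem : j ∈ I.J
  rel : I.r j ≤ σ
  nrej : ¬ Rej1 ε I j
  inD : j ∈ (st ε I t).1
  notD : j ∉ (st ε I σ).1
  max : ∀ i ∈ I.J, I.r i ≤ σ → ¬ Rej1 ε I i → i ∉ (st ε I σ).1 → cls I i ≤ cls I j
  le : t ≤ σ + I.p j
  wt : ∑ i ∈ I.J.filter (fun i => σ < I.r i ∧ I.r i < t), I.w i ≤ I.w j / ε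
  prev : ∀ u, σ < u → u ≤ t → (st ε I u).2 = some (j, σ)

/-- One of three things happens at time `t`: the current job continues, a densest waiting
job starts, or no job is waiting and the machine idles. -/
theorem step_cases {ε : ℝ} {I : SInstance} {t : ℕ}
    (hinv : ∀ j σ, (st ε I t).2 = some (j, σ) → j ∈ I.J ∧ I.r j ≤ t) :
    (∃ j σ, (st ε I t).2 = some (j, σ) ∧ t < σ + I.p j ∧
      ∑ i ∈ I.J.filter (fun i => σ < I.r i ∧ I.r i ≤ t), I.w i ≤ I.w j / ε ∧
      st ε I (t + 1) = st ε I t) ∨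
    ((∀ j σ, (st ε I t).2 = some (j, σ) → t < σ + I.p j →
      I.w j / ε < ∑ i ∈ I.J.filter (fun i => σ < I.r i ∧ I.r i ≤ t), I.w i) ∧
      ((∃ j ∈ I.J, I.r j ≤ t ∧ ¬ Rej1 ε I j ∧ j ∉ (st ε I t).1 ∧
        (∀ i ∈ I.J, I.r i ≤ t → ¬ Rej1 ε I i → i ∉ (st ε I t).1 → cls I i ≤ cls I j) ∧
        st ε I (t + 1) = (insert j (st ε I t).1, some (j, t))) ∨
      ((∀ i ∈ I.J, I.r i ≤ t → ¬ Rej1 ε I i → i ∈ (st ε I t).1) ∧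
        st ε I (t + 1) = ((st ε I t).1, none)))) := by
  by_cases hc : Cont ε (trunc I t) t (st ε I t).2
  · left
    have hs : st ε I (t + 1) = st ε I t := by
      rw [st, step, if_pos hc]
    obtain ⟨j, σ, h1, h2, h3⟩ := hc
    have hj := hinv j σ h1
    rw [trunc_sum, trunc_w hj] at h3
    rw [trunc_p hj] at h2
    exact ⟨j, σ, h1, h2, h3, hs⟩
  · right
    refine ⟨fun j σ h1 h2 => ?_, ?_⟩
    · by_contra h3
      have hj := hinv j σ h1
      refine hc ⟨j, σ, h1, ?_, ?_⟩
      · rwa [trunc_p hj]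
      · rw [trunc_sum, trunc_w hj]
        exact not_lt.1 h3
    by_cases hw : (waiting ε (trunc I t) (st ε I t).1).Nonempty
    · left
      obtain ⟨h1, h2⟩ := pick_spec (I := trunc I t) hw
      have h1' := mem_waiting.1 h1
      refine ⟨_, h1'.1, h1'.2.1, h1'.2.2.1, h1'.2.2.2, fun i a b c d => ?_, ?_⟩
      · have := h2 i (mem_waiting.2 ⟨a, b, c, d⟩)
        rwa [trunc_cls ⟨a, b⟩, trunc_cls ⟨h1'.1, h1'.2.1⟩] at this
      · rw [st, step, if_neg hc, if_pos hw]
    · right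
      refine ⟨fun i a b c => ?_, ?_⟩
      · by_contra d
        exact hw ⟨i, mem_waiting.2 ⟨a, b, c, d⟩⟩
      · rw [st, step, if_neg hc, if_neg hw]

theorem runOK {ε : ℝ} (hε : 0 < ε) (I : SInstance) : ∀ t j σ,
    (st ε I t).2 = some (j, σ) → RunOK ε I t j σ := by
  intro t
  induction t with
  | zero => intro j σ h; simp [st] at h
  | succ t ih =>
    intro j σ h
    rcases step_cases (fun j σ h => ⟨(ih j σ h).mem, (ih j σ h).rel.trans (ih j σ h).lt.le⟩)
      with ⟨j', σ', h1, h2, h3, h4⟩ | ⟨-, ⟨j', h0, h1, h2, h3, h4, h5⟩ | ⟨h1, h2⟩⟩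
    · have h0 := h
      rw [h4] at h
      obtain ⟨rfl, rfl⟩ : j = j' ∧ σ = σ' := by simpa using h.symm.trans h1
      have H := ih j σ h
      refine ⟨H.lt.trans (Nat.lt_succ_self t), H.mem, H.rel, H.nrej, ?_, H.notD, H.max, h2,
        ?_, fun u hu hu' => ?_⟩
      · rw [h4]; exact H.inD
      · simpa only [Nat.lt_succ_iff] using h3
      · rcases Nat.lt_or_ge t u with hlt | hle
        · obtain rfl : u = t + 1 := by omega
          exact h0
        · exact H.prev u hu hle
    · have hh := h
      rw [h5] at h
      obtain ⟨rfl, rfl⟩ : j' = j ∧ t = σ := by simpa using h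
      refine ⟨Nat.lt_succ_self _, h0, h1, h2, ?_, h3, h4, ?_, ?_, fun u hu hu' => ?_⟩
      · rw [h5]; exact Finset.mem_insert_self _ _
      · have := I.hp _ h0; omega
      · rw [Finset.filter_false_of_mem, Finset.sum_empty]
        · exact div_nonneg (I.hw _ h0).le hε.le
        · intro i _; omega
      · obtain rfl : u = t + 1 := by omega
        exact hh
    · rw [h2] at h; cases h

section
variable {ε : ℝ} (hε : 0 < ε) (I : SInstance)
include hε

theorem step_cases' (t : ℕ) :
    (∃ j σ, (st ε I t).2 = some (j, σ) ∧ t < σ + I.p j ∧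
      ∑ i ∈ I.J.filter (fun i => σ < I.r i ∧ I.r i ≤ t), I.w i ≤ I.w j / ε ∧
      st ε I (t + 1) = st ε I t) ∨
    ((∀ j σ, (st ε I t).2 = some (j, σ) → t < σ + I.p j →
      I.w j / ε < ∑ i ∈ I.J.filter (fun i => σ < I.r i ∧ I.r i ≤ t), I.w i) ∧
      ((∃ j ∈ I.J, I.r j ≤ t ∧ ¬ Rej1 ε I j ∧ j ∉ (st ε I t).1 ∧
        (∀ i ∈ I.J, I.r i ≤ t → ¬ Rej1 ε I i → i ∉ (st ε I t).1 → cls I i ≤ cls I j) ∧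
        st ε I (t + 1) = (insert j (st ε I t).1, some (j, t))) ∨
      ((∀ i ∈ I.J, I.r i ≤ t → ¬ Rej1 ε I i → i ∈ (st ε I t).1) ∧
        st ε I (t + 1) = ((st ε I t).1, none)))) :=
  step_cases fun j σ h => ⟨(runOK hε I t j σ h).mem,
    (runOK hε I t j σ h).rel.trans (runOK hε I t j σ h).lt.le⟩

theorem started_mono {s t : ℕ} (h : s ≤ t) : (st ε I s).1 ⊆ (st ε I t).1 := by
  induction t, h using Nat.le_induction with
  | base => exact Finset.Subset.refl _
  | succ t _ ih =>
    refine ih.trans ?_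
    rcases step_cases' hε I t with ⟨_, _, _, _, _, h⟩ | ⟨-, ⟨_, _, _, _, _, _, h⟩ | ⟨_, h⟩⟩
    · rw [h]
    · rw [h]; exact Finset.subset_insert _ _
    · rw [h]

theorem exists_start {t j : ℕ} (h : j ∈ (st ε I t).1) :
    ∃ σ < t, (st ε I (σ + 1)).2 = some (j, σ) := by
  induction t with
  | zero => simp [st] at h
  | succ t ih =>
    rcases step_cases' hε I t with ⟨_, _, _, _, _, h'⟩ | ⟨-, ⟨i, _, _, _, _, _, h'⟩ | ⟨_, h'⟩⟩
    · rw [h'] at h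
      obtain ⟨σ, h1, h2⟩ := ih h
      exact ⟨σ, by omega, h2⟩
    · have h0 := h'
      rw [h'] at h
      rcases Finset.mem_insert.1 h with rfl | h
      · exact ⟨t, by omega, by rw [h0]⟩
      · obtain ⟨σ, h1, h2⟩ := ih h
        exact ⟨σ, by omega, h2⟩
    · rw [h'] at h
      obtain ⟨σ, h1, h2⟩ := ih h
      exact ⟨σ, by omega, h2⟩

theorem start_unique {j s t σ τ : ℕ} (h : (st ε I s).2 = some (j, σ))
    (h' : (st ε I t).2 = some (j, τ)) : σ = τ := by
  have key : ∀ {s t σ τ : ℕ}, (st ε I s).2 = some (j, σ) → (st ε I t).2 = some (j, τ) →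
      ¬ σ < τ := by
    intro s t σ τ h h' hlt
    have H := runOK hε I _ _ _ h
    have H' := runOK hε I _ _ _ h'
    have h1 := (runOK hε I _ _ _ (H.prev (σ + 1) (by omega) H.lt)).inD
    exact H'.notD (started_mono hε I hlt h1)
  exact le_antisymm (not_lt.1 (key h' h)) (not_lt.1 (key h h'))

end

/-! ### The credit of a density class -/

section
variable {ε : ℝ}

theorem theta_pos (hε : 0 < ε) : 0 < theta ε := by
  unfold theta; positivity

theorem theta_le (hε : 0 < ε) : theta ε ≤ 2 * ε := by
  unfold theta
  rw [div_le_iff₀ (by linarith)]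
  nlinarith

theorem theta_lt_one (hε : 0 < ε) (h1 : ε < 1) : theta ε < 1 := by
  unfold theta
  rw [div_lt_iff₀ (by linarith)]
  linarith

theorem theta_mul (hε : 0 < ε) : (1 - theta ε) * (1 + ε) = 1 - ε := by
  unfold theta
  field_simp
  ring

/-- `A` is an initial segment, in the order of arrival, of the jobs of class `k`. -/
def Lower (I : SInstance) (k : ℤ) (A : Finset ℕ) : Prop :=
  ∀ a ∈ A, a ∈ I.J ∧ cls I a = k ∧ pred I a ⊆ A

theorem Lower.exists_last {I : SInstance} {k : ℤ} {A : Finset ℕ} (h : Lower I k A)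
    (hA : A.Nonempty) : ∃ a ∈ A, A.erase a = pred I a ∧ Lower I k (A.erase a) := by
  obtain ⟨a, ha, hmax⟩ := Finset.exists_max_image A (fun j => toLex (I.r j, j)) hA
  have he : A.erase a = pred I a := by
    ext i
    rw [Finset.mem_erase, mem_pred]
    constructor
    · rintro ⟨hne, hi⟩
      refine ⟨(h i hi).1, by rw [(h i hi).2.1, (h a ha).2.1], ?_⟩
      have := hmax i hi
      rw [Prod.Lex.toLex_le_toLex] at this
      simp only at this
      omega
    · rintro ⟨hi, hc, hlt⟩
      refine ⟨by rintro rfl; omega, (h a ha).2.2 (mem_pred.2 ⟨hi, hc, hlt⟩)⟩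
  refine ⟨a, ha, he, fun b hb => ?_⟩
  have hbA := Finset.mem_of_mem_erase hb
  refine ⟨(h b hbA).1, (h b hbA).2.1, fun i hi => ?_⟩
  rw [he, mem_pred] at hb ⊢
  have hi' := mem_pred.1 hi
  exact ⟨hi'.1, hi'.2.1.trans hb.2.1, by omega⟩

variable (hε : 0 < ε) (h1 : ε < 1) (I : SInstance)

include hε in
theorem cred_sum_nonneg {k : ℤ} {A : Finset ℕ} (h : Lower I k A) :
    0 ≤ ∑ i ∈ A, cred ε I i := by
  induction A using Finset.strongInduction with
  | H A ih =>
    rcases A.eq_empty_or_nonempty with rfl | hA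
    · simp
    obtain ⟨a, ha, he, hl⟩ := h.exists_last hA
    have hn := ih _ (Finset.erase_ssubset ha) hl
    rw [← Finset.add_sum_erase A _ ha]
    have hr := rej1_iff ε I a
    rw [← he] at hr
    have := mul_nonneg (theta_pos hε).le (Nat.cast_nonneg (α := ℝ) (I.p a))
    unfold cred at hn hr ⊢
    split_ifs with hc
    · have := hr.1 hc
      linarith
    · linarith

include hε h1 in
/-- The credit only increases when a job is retained, and is then at most its size. -/
theorem cred_sum_diff {k : ℤ} {A B : Finset ℕ} (h : Lower I k A) (hB : Lower I k B)
    (hBA : B ⊆ A) : ∑ i ∈ A, cred ε I i - ∑ i ∈ B, cred ε I i ≤ 0 ∨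
      ∃ j ∈ A, j ∉ B ∧ ¬ Rej1 ε I j ∧
        ∑ i ∈ A, cred ε I i - ∑ i ∈ B, cred ε I i ≤ I.p j := by
  induction A using Finset.strongInduction with
  | H A ih =>
    rcases A.eq_empty_or_nonempty with rfl | hA
    · rw [Finset.subset_empty.1 hBA]; simp
    obtain ⟨a, ha, he, hl⟩ := h.exists_last hA
    by_cases haB : a ∈ B
    · have : A = B := by
        refine Finset.Subset.antisymm (fun i hi => ?_) hBA
        by_cases hia : i = a
        · rwa [hia]
        · have : i ∈ A.erase a := Finset.mem_erase.2 ⟨hia, hi⟩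
          rw [he] at this
          exact (hB a haB).2.2 this
      left; rw [this]; simp
    have hBe : B ⊆ A.erase a := fun i hi =>
      Finset.mem_erase.2 ⟨by rintro rfl; exact haB hi, hBA hi⟩
    have hr := rej1_iff ε I a
    rw [← he] at hr
    have hsum := Finset.add_sum_erase A (cred ε I) ha
    by_cases hc : Rej1 ε I a
    · have hle : ∑ i ∈ A, cred ε I i ≤ ∑ i ∈ A.erase a, cred ε I i := by
        have : cred ε I a ≤ 0 := by
          unfold cred
          rw [if_pos hc]
          nlinarith [theta_lt_one hε h1, Nat.cast_nonneg (α := ℝ) (I.p a)]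
        linarith
      rcases ih _ (Finset.erase_ssubset ha) hl hBe with h | ⟨j, hj, hj2, hj3, hj4⟩
      · left; linarith
      · right
        exact ⟨j, Finset.mem_of_mem_erase hj, hj2, hj3, by linarith⟩
    · right
      refine ⟨a, ha, haB, hc, ?_⟩
      have hlt := not_le.1 fun h => hc (hr.2 h)
      have hb := cred_sum_nonneg hε I hB
      have : cred ε I a = theta ε * I.p a := by
        unfold cred; rw [if_neg hc, sub_zero]
      linarith

/-- The jobs of class `k` released before time `T`. -/
def pre (I : SInstance) (k : ℤ) (T : ℕ) : Finset ℕ :=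
  I.J.filter fun j => cls I j = k ∧ I.r j < T

omit hε h1 in
theorem pre_lower (k : ℤ) (T : ℕ) : Lower I k (pre I k T) := by
  intro a ha
  simp only [pre, Finset.mem_filter] at ha
  refine ⟨ha.1, ha.2.1, fun i hi => ?_⟩
  have hi := mem_pred.1 hi
  simp only [pre, Finset.mem_filter]
  exact ⟨hi.1, hi.2.1.trans ha.2.1, by omega⟩

end

/-! ### Workloads above a density threshold -/

/-- The volume of class at least `k` released at time `t`. -/
def aT (I : SInstance) (k : ℤ) (t : ℕ) : ℝ :=
  ∑ j ∈ I.J.filter (fun j => I.r j = t ∧ k ≤ cls I j), (I.p j : ℝ)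

/-- The volume of class at least `k` released at time `t` and not rejected on arrival. -/
def ret (ε : ℝ) (I : SInstance) (k : ℤ) (t : ℕ) : ℝ :=
  ∑ j ∈ I.J.filter (fun j => I.r j = t ∧ k ≤ cls I j ∧ ¬ Rej1 ε I j), (I.p j : ℝ)

/-- The total credit at time `T`, before the arrivals at `T`, of the classes at least `k`. -/
def cr (ε : ℝ) (I : SInstance) (k : ℤ) (T : ℕ) : ℝ :=
  ∑ j ∈ I.J.filter (fun j => I.r j < T ∧ k ≤ cls I j), cred ε I j

/-- The volume of class at least `k` waiting at time `t`, arrivals at `t` included, before the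
decision for slot `t`. -/
def U (ε : ℝ) (I : SInstance) (k : ℤ) (t : ℕ) : ℝ :=
  ∑ j ∈ I.J.filter (fun j => I.r j ≤ t ∧ k ≤ cls I j ∧ ¬ Rej1 ε I j ∧ j ∉ (st ε I t).1),
    (I.p j : ℝ)

/-- The unprocessed volume at time `t` of the job processed in the previous slot, if it has
class at least `k`. -/
def Q (ε : ℝ) (I : SInstance) (k : ℤ) (t : ℕ) : ℝ :=
  match (st ε I t).2 with
  | none => 0
  | some (j, σ) => if k ≤ cls I j then (σ : ℝ) + I.p j - t else 0

/-- The volume of job `j` left at time `t` by an offline schedule of speed `1 + ε`. -/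
def rem (ε : ℝ) (I : SInstance) (o : ℕ → Option ℕ) (j t : ℕ) : ℝ :=
  max 0 ((I.p j : ℝ) - (1 + ε) * ((Finset.range t).filter fun u => o u = some j).card)

/-- The volume of class at least `k` left at time `t` by an offline schedule, arrivals at `t`
included. -/
def Y (ε : ℝ) (I : SInstance) (o : ℕ → Option ℕ) (k : ℤ) (t : ℕ) : ℝ :=
  ∑ j ∈ I.J.filter (fun j => I.r j ≤ t ∧ k ≤ cls I j), rem ε I o j t

theorem Q_none {ε : ℝ} {I : SInstance} {k : ℤ} {t : ℕ} (h : (st ε I t).2 = none) :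
    Q ε I k t = 0 := by
  unfold Q; rw [h]

theorem Q_some {ε : ℝ} {I : SInstance} {k : ℤ} {t j σ : ℕ} (h : (st ε I t).2 = some (j, σ)) :
    Q ε I k t = if k ≤ cls I j then (σ : ℝ) + I.p j - t else 0 := by
  unfold Q; rw [h]

theorem cr_succ (ε : ℝ) (I : SInstance) (k : ℤ) (t : ℕ) :
    cr ε I k (t + 1) = cr ε I k t + theta ε * aT I k t - (aT I k t - ret ε I k t) := by
  have h1 : cr ε I k (t + 1) = cr ε I k t +
      ∑ j ∈ I.J.filter (fun j => I.r j = t ∧ k ≤ cls I j), cred ε I j := by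
    unfold cr
    rw [← Finset.sum_union]
    · congr 1
      ext j
      simp only [Finset.mem_filter, Finset.mem_union]
      grind
    · rw [Finset.disjoint_filter]
      intros; omega
  have h2 : ret ε I k t = ∑ j ∈ I.J.filter (fun j => I.r j = t ∧ k ≤ cls I j),
      ((I.p j : ℝ) - if Rej1 ε I j then (I.p j : ℝ) else 0) := by
    unfold ret
    have : I.J.filter (fun j => I.r j = t ∧ k ≤ cls I j ∧ ¬ Rej1 ε I j) =
      (I.J.filter (fun j => I.r j = t ∧ k ≤ cls I j)).filter (fun j => ¬ Rej1 ε I j) := by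
      ext j
      simp only [Finset.mem_filter]
      tauto
    rw [this, Finset.sum_filter]
    refine Finset.sum_congr rfl fun j _ => ?_
    split_ifs <;> simp
  rw [h1, h2, aT]
  unfold cred
  simp only [Finset.sum_sub_distrib, Finset.mul_sum]
  ring

theorem rem_nonneg (ε : ℝ) (I : SInstance) (o : ℕ → Option ℕ) (j t : ℕ) :
    0 ≤ rem ε I o j t := le_max_left _ _

/-- In any set of jobs, an offline schedule removes at most `1 + ε` units of volume per slot. -/
theorem rem_sum_succ {ε : ℝ} (hε : 0 < ε) (I : SInstance) (o : ℕ → Option ℕ) (A : Finset ℕ)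
    (t : ℕ) : ∑ j ∈ A, rem ε I o j t ≤ ∑ j ∈ A, rem ε I o j (t + 1) + (1 + ε) := by
  have h : ∀ j, rem ε I o j t ≤ rem ε I o j (t + 1) + if o t = some j then (1 + ε) else 0 := by
    intro j
    unfold rem
    rw [Finset.range_add_one, Finset.filter_insert]
    split_ifs with hc
    · rw [Finset.card_insert_of_notMem (by simp)]
      push_cast
      refine max_le ?_ ?_
      · have := le_max_left 0 ((I.p j : ℝ) - (1 + ε) *
          (((Finset.range t).filter fun u => o u = some j).card + 1))
        linarith
      · have := le_max_right 0 ((I.p j : ℝ) - (1 + ε) *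
          (((Finset.range t).filter fun u => o u = some j).card + 1))
        linarith
    · linarith
  calc _ ≤ ∑ j ∈ A, (rem ε I o j (t + 1) + if o t = some j then (1 + ε) else 0) :=
        Finset.sum_le_sum fun j _ => h j
    _ = ∑ j ∈ A, rem ε I o j (t + 1) + ∑ j ∈ A, if o t = some j then (1 + ε) else 0 :=
        Finset.sum_add_distrib
    _ ≤ _ := by
        gcongr
        cases ho : o t with
        | none => simp; linarith
        | some i =>
          simp only [Option.some.injEq]
          rw [Finset.sum_ite_eq]
          split_ifs <;> linarith

theorem rem_sum_add {ε : ℝ} (hε : 0 < ε) (I : SInstance) (o : ℕ → Option ℕ) (A : Finset ℕ)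
    (s m : ℕ) : ∑ j ∈ A, rem ε I o j s ≤ ∑ j ∈ A, rem ε I o j (s + m) + (1 + ε) * m := by
  induction m with
  | zero => simp
  | succ m ih =>
    have := rem_sum_succ hε I o A (s + m)
    push_cast
    rw [← add_assoc s m 1]
    linarith

theorem rem_eq {ε : ℝ} {I : SInstance} {o : ℕ → Option ℕ}
    (ho : ∀ t j, o t = some j → j ∈ I.J ∧ I.r j ≤ t) {j t : ℕ} (h : t ≤ I.r j) :
    rem ε I o j t = I.p j := by
  unfold rem
  rw [Finset.filter_false_of_mem]
  · simp
  · intro u hu hc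
    have := (ho u j hc).2
    have := Finset.mem_range.1 hu
    omega

theorem Y_succ {ε : ℝ} (hε : 0 < ε) {I : SInstance} {o : ℕ → Option ℕ}
    (ho : ∀ t j, o t = some j → j ∈ I.J ∧ I.r j ≤ t) (k : ℤ) (t : ℕ) :
    Y ε I o k t + aT I k (t + 1) - (1 + ε) ≤ Y ε I o k (t + 1) := by
  have h1 : Y ε I o k (t + 1) =
      ∑ j ∈ I.J.filter (fun j => I.r j ≤ t ∧ k ≤ cls I j), rem ε I o j (t + 1) +
      ∑ j ∈ I.J.filter (fun j => I.r j = t + 1 ∧ k ≤ cls I j), rem ε I o j (t + 1) := by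
    unfold Y
    rw [← Finset.sum_union]
    · congr 1
      ext j
      simp only [Finset.mem_filter, Finset.mem_union]
      grind
    · rw [Finset.disjoint_filter]
      intros; omega
  have h2 : ∑ j ∈ I.J.filter (fun j => I.r j = t + 1 ∧ k ≤ cls I j), rem ε I o j (t + 1) =
      aT I k (t + 1) := by
    unfold aT
    refine Finset.sum_congr rfl fun j hj => rem_eq ho ?_
    simp only [Finset.mem_filter] at hj
    omega
  have := rem_sum_succ hε I o (I.J.filter (fun j => I.r j ≤ t ∧ k ≤ cls I j)) t
  rw [h1, h2]
  unfold Y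
  linarith

/-- The volume of class at least `k` released strictly between `σ` and `t`. -/
def arr (I : SInstance) (k : ℤ) (σ t : ℕ) : ℝ :=
  ∑ j ∈ I.J.filter (fun j => σ < I.r j ∧ I.r j < t ∧ k ≤ cls I j), (I.p j : ℝ)

theorem arr_nonneg (I : SInstance) (k : ℤ) (σ t : ℕ) : 0 ≤ arr I k σ t :=
  Finset.sum_nonneg fun _ _ => Nat.cast_nonneg _

theorem aT_nonneg (I : SInstance) (k : ℤ) (t : ℕ) : 0 ≤ aT I k t :=
  Finset.sum_nonneg fun _ _ => Nat.cast_nonneg _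

theorem Y_nonneg (ε : ℝ) (I : SInstance) (o : ℕ → Option ℕ) (k : ℤ) (t : ℕ) :
    0 ≤ Y ε I o k t :=
  Finset.sum_nonneg fun _ _ => rem_nonneg _ _ _ _ _

theorem aT_le_Y {ε : ℝ} {I : SInstance} {o : ℕ → Option ℕ}
    (ho : ∀ t j, o t = some j → j ∈ I.J ∧ I.r j ≤ t) (k : ℤ) (t : ℕ) :
    aT I k t ≤ Y ε I o k t := by
  have h2 : aT I k t =
      ∑ j ∈ I.J.filter (fun j => I.r j = t ∧ k ≤ cls I j), rem ε I o j t := by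
    unfold aT
    refine Finset.sum_congr rfl fun j hj => (rem_eq ho ?_).symm
    simp only [Finset.mem_filter] at hj
    omega
  rw [h2]
  refine Finset.sum_le_sum_of_subset_of_nonneg (fun j hj => ?_)
    fun _ _ _ => rem_nonneg _ _ _ _ _
  simp only [Finset.mem_filter] at hj ⊢
  exact ⟨hj.1, hj.2.1.le, hj.2.2⟩

theorem arr_le_Y {ε : ℝ} (hε : 0 < ε) {I : SInstance} {o : ℕ → Option ℕ}
    (ho : ∀ t j, o t = some j → j ∈ I.J ∧ I.r j ≤ t) (k : ℤ) {σ t : ℕ} (h : σ < t) :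
    aT I k t + arr I k σ t - (1 + ε) * (t - σ) ≤ Y ε I o k t := by
  have h1 : aT I k t + arr I k σ t =
      ∑ j ∈ I.J.filter (fun j => σ < I.r j ∧ I.r j ≤ t ∧ k ≤ cls I j), rem ε I o j σ := by
    rw [Finset.sum_congr rfl fun j hj =>
      rem_eq (ε := ε) ho (Finset.mem_filter.1 hj).2.1.le]
    unfold aT arr
    rw [← Finset.sum_union]
    · congr 1
      ext j
      simp only [Finset.mem_filter, Finset.mem_union]
      grind
    · rw [Finset.disjoint_filter]
      intros; omega
  have h2 := rem_sum_add hε I o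
    (I.J.filter (fun j => σ < I.r j ∧ I.r j ≤ t ∧ k ≤ cls I j)) σ (t - σ)
  rw [Nat.add_sub_of_le h.le, Nat.cast_sub h.le] at h2
  have h3 : ∑ j ∈ I.J.filter (fun j => σ < I.r j ∧ I.r j ≤ t ∧ k ≤ cls I j), rem ε I o j t ≤
      Y ε I o k t := by
    refine Finset.sum_le_sum_of_subset_of_nonneg (fun j hj => ?_)
      fun _ _ _ => rem_nonneg _ _ _ _ _
    simp only [Finset.mem_filter] at hj ⊢
    exact ⟨hj.1, hj.2.2⟩
  linarith

section
variable {I : SInstance} {j : ℕ} (hj : j ∈ I.J)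
include hj

theorem cls_le : (4 : ℝ) ^ cls I j * I.p j ≤ I.w j := by
  have hp : (0 : ℝ) < I.p j := Nat.cast_pos.2 (I.hp j hj)
  have := Int.zpow_log_le_self (b := 4) (by norm_num) (div_pos (I.hw j hj) hp)
  rw [le_div_iff₀ hp] at this
  exact_mod_cast this

theorem lt_cls : I.w j < (4 : ℝ) ^ (cls I j + 1) * I.p j := by
  have hp : (0 : ℝ) < I.p j := Nat.cast_pos.2 (I.hp j hj)
  have := Int.lt_zpow_succ_log_self (b := 4) (by norm_num) (I.w j / I.p j)
  rw [div_lt_iff₀ hp] at this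
  exact_mod_cast this

theorem le_four_cls : I.w j ≤ 4 * ((4 : ℝ) ^ cls I j * I.p j) := by
  have := lt_cls hj
  rw [zpow_add_one₀ (by norm_num)] at this
  linarith

end

section
variable {ε : ℝ} (hε : 0 < ε) (I : SInstance)
include hε

theorem Q_nonneg (k : ℤ) (t : ℕ) : 0 ≤ Q ε I k t := by
  cases h : (st ε I t).2 with
  | none => rw [Q_none h]
  | some x =>
    obtain ⟨j, σ⟩ := x
    rw [Q_some h]
    have : (t : ℝ) ≤ σ + I.p j := by exact_mod_cast (runOK hε I _ _ _ h).le
    split_ifs <;> linarith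

/-- Every slot spent on a job of class at least `k` lowers the workload of these classes by
one unit. -/
theorem workload_succ {k : ℤ} {t j σ : ℕ} (h : (st ε I (t + 1)).2 = some (j, σ))
    (hk : k ≤ cls I j) :
    U ε I k (t + 1) + Q ε I k (t + 1) ≤ U ε I k t + Q ε I k t - 1 + ret ε I k (t + 1) := by
  have hU : U ε I k (t + 1) ≤ ∑ j ∈ I.J.filter (fun j => I.r j ≤ t ∧ k ≤ cls I j ∧
      ¬ Rej1 ε I j ∧ j ∉ (st ε I (t + 1)).1), (I.p j : ℝ) + ret ε I k (t + 1) := by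
    unfold U ret
    rw [← Finset.sum_union]
    · refine Finset.sum_le_sum_of_subset_of_nonneg (fun j hj => ?_)
        fun _ _ _ => Nat.cast_nonneg _
      simp only [Finset.mem_filter, Finset.mem_union] at hj ⊢
      grind
    · rw [Finset.disjoint_filter]
      intros; omega
  have hp : (1 : ℝ) ≤ I.p j := by exact_mod_cast I.hp j (runOK hε I _ _ _ h).mem
  rcases step_cases' hε I t with ⟨j', σ', h1, h2, h3, h4⟩ |
    ⟨-, ⟨j', h0, h1, h2, h3, h4, h5⟩ | ⟨h1, h2⟩⟩
  · rw [h4] at hU h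
    have e1 := Q_some (k := k) h
    have h' : (st ε I (t + 1)).2 = some (j, σ) := by rw [h4]; exact h
    have e2 := Q_some (k := k) h'
    rw [if_pos hk] at e1 e2
    rw [e1, e2]
    push_cast
    change U ε I k (t + 1) ≤ U ε I k t + _ at hU
    linarith
  · have hQ := Q_nonneg hε I k t
    have e2 := Q_some (k := k) h
    rw [if_pos hk] at e2
    rw [h5] at h
    obtain ⟨rfl, rfl⟩ : j' = j ∧ t = σ := by simpa using h
    have e3 : ∑ j ∈ I.J.filter (fun j => I.r j ≤ t ∧ k ≤ cls I j ∧
        ¬ Rej1 ε I j ∧ j ∉ (st ε I (t + 1)).1), (I.p j : ℝ) + I.p j' ≤ U ε I k t := by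
      rw [add_comm, ← Finset.sum_insert (f := fun j => (I.p j : ℝ)) (a := j')]
      · refine Finset.sum_le_sum_of_subset_of_nonneg (fun i hi => ?_)
          fun _ _ _ => Nat.cast_nonneg _
        rw [h5] at hi
        simp only [Finset.mem_filter, Finset.mem_insert] at hi ⊢
        rcases hi with rfl | hi
        · exact ⟨h0, h1, hk, h2, h3⟩
        · tauto
      · rw [h5]
        simp
    rw [e2]
    push_cast
    linarith
  · rw [h2] at h; cases h

theorem weight_arr {k : ℤ} {t l σ : ℕ} (h : (st ε I t).2 = some (l, σ)) (hk : cls I l < k) :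
    arr I k σ t ≤ I.p l / ε := by
  have H := runOK hε I _ _ _ h
  have h4 : (0 : ℝ) < 4 ^ k := by positivity
  have h1 : 4 ^ k * arr I k σ t ≤
      ∑ i ∈ I.J.filter (fun i => σ < I.r i ∧ I.r i < t), I.w i := by
    unfold arr
    rw [Finset.mul_sum]
    calc _ ≤ ∑ i ∈ I.J.filter (fun j => σ < I.r j ∧ I.r j < t ∧ k ≤ cls I j), I.w i := by
          refine Finset.sum_le_sum fun i hi => ?_
          simp only [Finset.mem_filter] at hi
          refine le_trans ?_ (cls_le hi.1)
          gcongr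
          · norm_num
          · exact hi.2.2.2
      _ ≤ _ := by
          refine Finset.sum_le_sum_of_subset_of_nonneg (fun i hi => ?_) fun i hi _ => ?_
          · simp only [Finset.mem_filter] at hi ⊢
            tauto
          · exact (I.hw i (Finset.mem_filter.1 hi).1).le
  have h2 : I.w l ≤ 4 ^ k * I.p l := by
    refine (lt_cls H.mem).le.trans ?_
    gcongr
    · norm_num
    · omega
  have h3 : 4 ^ k * arr I k σ t ≤ 4 ^ k * (I.p l / ε) := by
    refine h1.trans (H.wt.trans ?_)
    rw [← mul_div_assoc]
    gcongr
  exact le_of_mul_le_mul_left h3 h4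

/-- `b` bounds the volume of class at least `k` held up by a job of lower class running just
before `s`. -/
def Blk (ε : ℝ) (I : SInstance) (k : ℤ) (s : ℕ) (b : ℝ) : Prop :=
  b = 0 ∨ ∃ l σ, (st ε I s).2 = some (l, σ) ∧ b ≤ arr I k σ s ∧ b ≤ 3 * I.p l

/-- The workload at a time just after a slot not used by class at least `k`. If a job `l` of
lower class ran, all jobs of class at least `k` present at its start had been started before,
and the offline schedule cannot have removed more than `(1 + ε) * p l` of the volume that
arrived since. -/
theorem workload_base (h1 : ε < 1) {o : ℕ → Option ℕ}
    (ho : ∀ t j, o t = some j → j ∈ I.J ∧ I.r j ≤ t) {k : ℤ} {t : ℕ}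
    (h : ∀ j σ, (st ε I t).2 = some (j, σ) → cls I j < k) :
    ∃ b, Blk ε I k t b ∧ U ε I k t + Q ε I k t ≤
      (1 - theta ε) * Y ε I o k t + cr ε I k (t + 1) - cr ε I k t + b := by
  have hc := cr_succ ε I k t
  have hθ := theta_lt_one hε h1
  have hθ2 := theta_le hε
  have hmul := theta_mul hε
  cases hs : (st ε I t).2 with
  | none =>
    refine ⟨0, Or.inl rfl, ?_⟩
    have hU : U ε I k t ≤ ret ε I k t := by
      unfold U ret
      refine Finset.sum_le_sum_of_subset_of_nonneg (fun j hj => ?_)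
        fun _ _ _ => Nat.cast_nonneg _
      simp only [Finset.mem_filter] at hj ⊢
      obtain ⟨a, b, c, d, e⟩ := hj
      refine ⟨a, ?_, c, d⟩
      by_contra hne
      have hlt : I.r j < t := lt_of_le_of_ne b hne
      obtain ⟨u, rfl⟩ : ∃ u, t = u + 1 := ⟨t - 1, by omega⟩
      rcases step_cases' hε I u with ⟨j', σ', h1, h2, h3, h4⟩ |
        ⟨-, ⟨j', h0, h1, h2, h3, h4, h5⟩ | ⟨h1, h2⟩⟩
      · rw [h4, h1] at hs; cases hs
      · rw [h5] at hs; cases hs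
      · exact e (started_mono hε I (Nat.le_succ u) (h1 j a (by omega) d))
    rw [Q_none hs]
    have hY := aT_le_Y (ε := ε) ho k t
    have := mul_le_mul_of_nonneg_left hY (by linarith : 0 ≤ 1 - theta ε)
    linarith
  | some x =>
    obtain ⟨l, σ⟩ := x
    have hl := h l σ hs
    have H := runOK hε I _ _ _ hs
    have hA := weight_arr hε I hs hl
    have hU : U ε I k t ≤ ret ε I k t + arr I k σ t := by
      unfold U ret arr
      rw [← Finset.sum_union]
      · refine Finset.sum_le_sum_of_subset_of_nonneg (fun j hj => ?_)
          fun _ _ _ => Nat.cast_nonneg _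
        simp only [Finset.mem_filter, Finset.mem_union] at hj ⊢
        obtain ⟨a, b, c, d, e⟩ := hj
        have : σ < I.r j := by
          by_contra hle
          have := H.max j a (by omega) d fun hD => e (started_mono hε I H.lt.le hD)
          omega
        grind
      · rw [Finset.disjoint_filter]
        intros; omega
    refine ⟨min (arr I k σ t) (3 * I.p l),
      Or.inr ⟨l, σ, hs, min_le_left _ _, min_le_right _ _⟩, ?_⟩
    rw [Q_some hs, if_neg (not_le.2 hl), add_zero]
    have hY := mul_le_mul_of_nonneg_left (aT_le_Y (ε := ε) ho k t)
      (by linarith : 0 ≤ 1 - theta ε)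
    have hY2 := mul_le_mul_of_nonneg_left (arr_le_Y hε ho k H.lt)
      (by linarith : 0 ≤ 1 - theta ε)
    have hd : (t : ℝ) - σ ≤ I.p l := by
      have : (t : ℝ) ≤ σ + I.p l := by exact_mod_cast H.le
      linarith
    -- Either everything that arrived is charged to `b`, or the offline machine, of speed `1 + ε`
    -- and active for at most `p l` slots, is compared on the arrivals since `σ`.
    rcases min_choice (arr I k σ t) (3 * (I.p l : ℝ)) with hm | hm <;> rw [hm]
    · linarith
    · have e1 : theta ε * arr I k σ t ≤ 2 * I.p l := by
        calc theta ε * arr I k σ t ≤ (2 * ε) * (I.p l / ε) :=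
              mul_le_mul hθ2 hA (arr_nonneg _ _ _ _) (by linarith)
          _ = 2 * I.p l := by field_simp
      have e2 : (1 - theta ε) * ((1 + ε) * ((t : ℝ) - σ)) ≤ I.p l := by
        have hσ : (0 : ℝ) ≤ (t : ℝ) - σ := by
          have : (σ : ℝ) ≤ t := by exact_mod_cast H.lt.le
          linarith
        rw [← mul_assoc, hmul]
        nlinarith
      linarith

/-- The amortized bound: as long as the slots are used by class at least `k`, the workload
shrinks relative to the offline one at rate `ε`, up to changes of the credit. -/
theorem workload_bound (h1 : ε < 1) {o : ℕ → Option ℕ}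
    (ho : ∀ t j, o t = some j → j ∈ I.J ∧ I.r j ≤ t) (k : ℤ) (t : ℕ) :
    ∃ s ≤ t, ∃ b, Blk ε I k s b ∧ U ε I k t + Q ε I k t ≤
      (1 - theta ε) * Y ε I o k t + cr ε I k (t + 1) - cr ε I k s + b - ε * (t - s) := by
  have base : ∀ t, (∀ j σ, (st ε I t).2 = some (j, σ) → cls I j < k) →
      ∃ s ≤ t, ∃ b, Blk ε I k s b ∧ U ε I k t + Q ε I k t ≤
      (1 - theta ε) * Y ε I o k t + cr ε I k (t + 1) - cr ε I k s + b - ε * (t - s) := by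
    intro t h
    obtain ⟨b, hb, hb'⟩ := workload_base hε I h1 ho h
    exact ⟨t, le_rfl, b, hb, by linarith⟩
  induction t with
  | zero => exact base 0 fun j σ h => by simp [st] at h
  | succ t ih =>
    by_cases h : ∀ j σ, (st ε I (t + 1)).2 = some (j, σ) → cls I j < k
    · exact base _ h
    · push Not at h
      obtain ⟨j, σ, hs, hk⟩ := h
      obtain ⟨s, hst, b, hb, hle⟩ := ih
      refine ⟨s, by omega, b, hb, ?_⟩
      have e1 := workload_succ hε I hs hk
      have e2 := cr_succ ε I k (t + 1)
      have e3 := mul_le_mul_of_nonneg_left (Y_succ hε ho k t)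
        (by linarith [theta_lt_one hε h1] : 0 ≤ 1 - theta ε)
      have hmul := theta_mul hε
      push_cast
      nlinarith

end

/-! ### Summation over density classes -/

theorem geom_sum_int {S : Finset ℤ} {f : ℤ → ℕ} (hf : Set.InjOn f S) :
    ∑ i ∈ S, (1 / 2 : ℝ) ^ f i ≤ 2 := by
  rw [← Finset.sum_image (f := fun n => (1 / 2 : ℝ) ^ n) hf]
  calc _ ≤ ∑' n : ℕ, (1 / 2 : ℝ) ^ n :=
        summable_geometric_two.sum_le_tsum _ fun _ _ => by positivity
    _ = 2 := tsum_geometric_two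

theorem two_zpow_sub {k i : ℤ} (h : k ≤ i) :
    (2 : ℝ) ^ (k - i) = (1 / 2) ^ (i - k).toNat := by
  have : k - i = -((i - k).toNat : ℤ) := by omega
  rw [this, zpow_neg, zpow_natCast, one_div, inv_pow]

theorem geom_above (K : Finset ℤ) (k : ℤ) :
    ∑ i ∈ K.filter (fun i => k ≤ i), (2 : ℝ) ^ (k - i) ≤ 2 := by
  rw [Finset.sum_congr rfl fun i hi => two_zpow_sub (Finset.mem_filter.1 hi).2]
  refine geom_sum_int fun a ha b hb hab => ?_
  simp only [Finset.coe_filter, Set.mem_ofPred_eq] at ha hb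
  omega

theorem geom_below (K : Finset ℤ) (i : ℤ) :
    ∑ k ∈ K.filter (fun k => k ≤ i), (4 : ℝ) ^ k * 2 ^ (i - k) ≤ 2 * 4 ^ i := by
  have h : ∀ k ∈ K.filter (fun k => k ≤ i),
      (4 : ℝ) ^ k * 2 ^ (i - k) = 4 ^ i * (1 / 2) ^ (i - k).toNat := by
    intro k hk
    rw [← two_zpow_sub (Finset.mem_filter.1 hk).2]
    have : (4 : ℝ) = 2 ^ (2 : ℤ) := by norm_num
    rw [this, ← zpow_mul, ← zpow_mul, ← zpow_add₀ (by norm_num), ← zpow_add₀ (by norm_num)]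
    congr 1
    ring
  rw [Finset.sum_congr rfl h, ← Finset.mul_sum, mul_comm 2]
  gcongr
  refine geom_sum_int fun a ha b hb hab => ?_
  simp only [Finset.coe_filter, Set.mem_ofPred_eq] at ha hb
  omega

theorem geom_below' (K : Finset ℤ) (i : ℤ) :
    ∑ k ∈ K.filter (fun k => k ≤ i), (4 : ℝ) ^ k ≤ 2 * 4 ^ i := by
  refine le_trans (Finset.sum_le_sum fun k hk => ?_) (geom_below K i)
  have : (1 : ℝ) ≤ 2 ^ (i - k) :=
    one_le_zpow₀ (by norm_num) (by have := (Finset.mem_filter.1 hk).2; omega)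
  have h4 : (0 : ℝ) < 4 ^ k := by positivity
  nlinarith

/-- The density classes of the jobs of the instance. -/
def classes (I : SInstance) : Finset ℤ := I.J.image (cls I)

theorem sum_swap (I : SInstance) (A : Finset ℕ) (F : ℤ → ℕ → ℝ) :
    ∑ k ∈ classes I, ∑ j ∈ A.filter (fun j => k ≤ cls I j), F k j =
      ∑ j ∈ A, ∑ k ∈ (classes I).filter (fun k => k ≤ cls I j), F k j := by
  refine Finset.sum_comm' fun k j => ?_
  simp only [Finset.mem_filter]
  tauto

theorem sum_classes_le (I : SInstance) (A : Finset ℕ) (f : ℕ → ℝ) (hf : ∀ j ∈ A, 0 ≤ f j) :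
    ∑ k ∈ classes I, (4 : ℝ) ^ k * ∑ j ∈ A.filter (fun j => k ≤ cls I j), f j ≤
      2 * ∑ j ∈ A, 4 ^ cls I j * f j := by
  simp only [Finset.mul_sum]
  rw [sum_swap I A fun k j => (4 : ℝ) ^ k * f j]
  refine Finset.sum_le_sum fun j hj => ?_
  rw [← Finset.sum_mul, ← mul_assoc]
  exact mul_le_mul_of_nonneg_right (geom_below' _ _) (hf j hj)

theorem le_sum_classes (I : SInstance) (A : Finset ℕ) (hA : A ⊆ I.J) (f : ℕ → ℝ)
    (hf : ∀ j ∈ A, 0 ≤ f j) :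
    ∑ j ∈ A, 4 ^ cls I j * f j ≤
      ∑ k ∈ classes I, (4 : ℝ) ^ k * ∑ j ∈ A.filter (fun j => k ≤ cls I j), f j := by
  simp only [Finset.mul_sum]
  rw [sum_swap I A fun k j => (4 : ℝ) ^ k * f j]
  refine Finset.sum_le_sum fun j hj => ?_
  refine Finset.single_le_sum (f := fun k => (4 : ℝ) ^ k * f j)
    (fun k _ => mul_nonneg (by positivity) (hf j hj)) ?_
  exact Finset.mem_filter.2 ⟨Finset.mem_image_of_mem _ (hA hj), le_rfl⟩

theorem sum_window_le (T a : ℕ) {L x : ℝ} (hL : 0 ≤ L) (hx : 0 ≤ x) :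
    ∑ t ∈ Finset.range T, (if a ≤ t ∧ (t : ℝ) ≤ a + L then x else 0) ≤ (L + 1) * x := by
  rw [← Finset.sum_filter, Finset.sum_const, nsmul_eq_mul]
  gcongr
  have hsub : (Finset.range T).filter (fun t : ℕ => a ≤ t ∧ (t : ℝ) ≤ a + L) ⊆
      Finset.Icc a (a + ⌊L⌋₊) := by
    intro t ht
    simp only [Finset.mem_filter, Finset.mem_Icc] at ht ⊢
    refine ⟨ht.2.1, ?_⟩
    have : ((t - a : ℕ) : ℝ) ≤ L := by
      rw [Nat.cast_sub ht.2.1]; linarith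
    have := Nat.le_floor this
    omega
  have hc := Finset.card_le_card hsub
  rw [Nat.card_Icc] at hc
  have h2 := Nat.floor_le hL
  have h3 : (((Finset.range T).filter
    (fun t : ℕ => a ≤ t ∧ (t : ℝ) ≤ a + L)).card : ℝ) ≤ ⌊L⌋₊ + 1 := by
    exact_mod_cast hc.trans (by omega)
  linarith

/-! ### The pointwise bound on the workload -/

/-- The jobs released while `l` is being processed, after its start. -/
def During (ε : ℝ) (I : SInstance) (l : ℕ) : Finset ℕ :=
  I.J.filter fun i => ∃ σ, (st ε I (I.r i + 1)).2 = some (l, σ) ∧ σ < I.r i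

/-- The volume of class at least `k` released while `l` is being processed. -/
def blocked (ε : ℝ) (I : SInstance) (k : ℤ) (l : ℕ) : ℝ :=
  ∑ i ∈ (During ε I l).filter (fun i => k ≤ cls I i), (I.p i : ℝ)

/-- The start time of job `l`, and `0` if it never starts. -/
def start (ε : ℝ) (I : SInstance) (l : ℕ) : ℕ :=
  if h : ∃ σ, (st ε I (σ + 1)).2 = some (l, σ) then h.choose else 0

theorem blocked_nonneg (ε : ℝ) (I : SInstance) (k : ℤ) (l : ℕ) : 0 ≤ blocked ε I k l :=
  Finset.sum_nonneg fun _ _ => Nat.cast_nonneg _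

section
variable {ε : ℝ} (hε : 0 < ε) (I : SInstance)
include hε

theorem start_eq {t l σ : ℕ} (h : (st ε I t).2 = some (l, σ)) : start ε I l = σ := by
  have H := runOK hε I _ _ _ h
  have hex : ∃ σ, (st ε I (σ + 1)).2 = some (l, σ) :=
    ⟨σ, H.prev (σ + 1) (by omega) H.lt⟩
  unfold start
  rw [dif_pos hex]
  exact start_unique hε I hex.choose_spec h

theorem arr_le_blocked {t l σ : ℕ} (h : (st ε I t).2 = some (l, σ)) (k : ℤ) :
    arr I k σ t ≤ blocked ε I k l := by
  have H := runOK hε I _ _ _ h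
  refine Finset.sum_le_sum_of_subset_of_nonneg (fun i hi => ?_)
    fun _ _ _ => Nat.cast_nonneg _
  simp only [During, Finset.mem_filter] at hi ⊢
  exact ⟨⟨hi.1, σ, H.prev _ (by omega) (by omega), hi.2.1⟩, hi.2.2.2⟩

theorem during_weight {l : ℕ} (hl : l ∈ I.J) :
    ∑ i ∈ During ε I l, I.w i ≤ I.w l / ε := by
  rcases (During ε I l).eq_empty_or_nonempty with h | h
  · rw [h, Finset.sum_empty]
    exact div_nonneg (I.hw l hl).le hε.le
  obtain ⟨m, hm, hmax⟩ := Finset.exists_max_image _ I.r h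
  obtain ⟨hmJ, σ, hσ, hlt⟩ := Finset.mem_filter.1 hm
  refine le_trans ?_ (runOK hε I _ _ _ hσ).wt
  refine Finset.sum_le_sum_of_subset_of_nonneg (fun i hi => ?_) fun i hi _ => ?_
  · have := hmax i hi
    obtain ⟨hiJ, τ, hτ, hlt'⟩ := Finset.mem_filter.1 hi
    obtain rfl := start_unique hε I hσ hτ
    exact Finset.mem_filter.2 ⟨hiJ, hlt', by omega⟩
  · exact (I.hw i (Finset.mem_filter.1 hi).1).le

theorem blocked_sum {l : ℕ} (hl : l ∈ I.J) :
    ∑ k ∈ classes I, (4 : ℝ) ^ k * blocked ε I k l ≤ 2 * (I.w l / ε) := by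
  refine (sum_classes_le I _ _ fun _ _ => Nat.cast_nonneg _).trans ?_
  gcongr
  refine le_trans (Finset.sum_le_sum fun i hi => ?_) (during_weight hε I hl)
  exact cls_le (Finset.mem_filter.1 hi).1

omit hε in
theorem cr_eq_sum (k : ℤ) (T : ℕ) : cr ε I k T =
    ∑ i ∈ (classes I).filter (fun i => k ≤ i), ∑ j ∈ pre I i T, cred ε I j := by
  unfold cr
  rw [← Finset.sum_fiberwise_of_maps_to (g := cls I)
    (t := (classes I).filter (fun i => k ≤ i))]
  · refine Finset.sum_congr rfl fun i hi => Finset.sum_congr ?_ fun _ _ => rfl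
    have := (Finset.mem_filter.1 hi).2
    ext j
    simp only [pre, Finset.mem_filter]
    constructor
    · rintro ⟨⟨a, b, c⟩, d⟩; exact ⟨a, d, b⟩
    · rintro ⟨a, d, b⟩; exact ⟨⟨a, b, by omega⟩, d⟩
  · intro j hj
    simp only [Finset.mem_filter] at hj
    exact Finset.mem_filter.2 ⟨Finset.mem_image_of_mem _ hj.1, hj.2.2⟩

/-- The increase of the credit since time `s`, less the decay of the workload, is bounded by
the sizes of recent jobs. The decay is shared among the classes `i ≥ k` in proportion to
`2 ^ (k - i)`, and each class pays for its last retained job. -/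
theorem credit_bound (h1 : ε < 1) (k : ℤ) {s t : ℕ} (hst : s ≤ t) :
    cr ε I k (t + 1) - cr ε I k s - ε / 2 * (t - s) ≤
      ∑ j ∈ I.J.filter (fun j => k ≤ cls I j),
        if I.r j ≤ t ∧ (t : ℝ) ≤ I.r j + 4 * I.p j * 2 ^ (cls I j - k) / ε
        then (I.p j : ℝ) else 0 := by
  have hts : (0 : ℝ) ≤ (t : ℝ) - s := by
    have : (s : ℝ) ≤ t := by exact_mod_cast hst
    linarith
  rw [cr_eq_sum, cr_eq_sum, ← Finset.sum_fiberwise_of_maps_to (g := cls I)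
    (t := (classes I).filter (fun i => k ≤ i)) (s := I.J.filter (fun j => k ≤ cls I j))]
  swap
  · intro j hj
    simp only [Finset.mem_filter] at hj
    exact Finset.mem_filter.2 ⟨Finset.mem_image_of_mem _ hj.1, hj.2⟩
  -- Class `i` receives the decay rate `ε / 4 * 2 ^ (k - i)`; these add up to at most `ε / 2`.
  have hg := mul_le_mul_of_nonneg_left (geom_above (classes I) k)
    (by positivity : 0 ≤ ε / 4 * ((t : ℝ) - s))
  rw [Finset.mul_sum] at hg
  have hterm : ∀ i ∈ (classes I).filter (fun i => k ≤ i),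
      ∑ j ∈ pre I i (t + 1), cred ε I j - ∑ j ∈ pre I i s, cred ε I j -
        ε / 4 * ((t : ℝ) - s) * 2 ^ (k - i) ≤
      ∑ j ∈ (I.J.filter (fun j => k ≤ cls I j)).filter (fun j => cls I j = i),
        if I.r j ≤ t ∧ (t : ℝ) ≤ I.r j + 4 * I.p j * 2 ^ (cls I j - k) / ε
        then (I.p j : ℝ) else 0 := by
    intro i hi
    have hi' := (Finset.mem_filter.1 hi).2
    have hpow : (0 : ℝ) < 2 ^ (k - i) := by positivity
    have hdec : 0 ≤ ε / 4 * ((t : ℝ) - s) * 2 ^ (k - i) := by positivity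
    have hnn : ∀ j ∈ (I.J.filter (fun j => k ≤ cls I j)).filter (fun j => cls I j = i),
        0 ≤ (if I.r j ≤ t ∧ (t : ℝ) ≤ I.r j + 4 * I.p j * 2 ^ (cls I j - k) / ε
          then (I.p j : ℝ) else 0) := by
      intro j _; split_ifs <;> positivity
    by_cases hneg : ∑ j ∈ pre I i (t + 1), cred ε I j - ∑ j ∈ pre I i s, cred ε I j -
        ε / 4 * ((t : ℝ) - s) * 2 ^ (k - i) ≤ 0
    · exact hneg.trans (Finset.sum_nonneg hnn)
    rw [not_le] at hneg
    have hsub : pre I i s ⊆ pre I i (t + 1) := by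
      intro j hj
      simp only [pre, Finset.mem_filter] at hj ⊢
      exact ⟨hj.1, hj.2.1, by omega⟩
    rcases cred_sum_diff hε h1 I (pre_lower I i (t + 1)) (pre_lower I i s) hsub with
      hc | ⟨j, hj, hj2, -, hj4⟩
    · linarith
    simp only [pre, Finset.mem_filter] at hj hj2
    obtain ⟨hjJ, rfl, hjt⟩ := hj
    have hsj : s ≤ I.r j := by
      by_contra hlt; exact hj2 ⟨hjJ, rfl, by omega⟩
    have hmem : j ∈ (I.J.filter (fun j => k ≤ cls I j)).filter
        (fun j' => cls I j' = cls I j) := by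
      exact Finset.mem_filter.2 ⟨Finset.mem_filter.2 ⟨hjJ, hi'⟩, rfl⟩
    refine le_trans ?_ (Finset.single_le_sum hnn hmem)
    rw [if_pos]
    · linarith
    refine ⟨by omega, ?_⟩
    have hsj' : (s : ℝ) ≤ I.r j := by exact_mod_cast hsj
    have hinv : (2 : ℝ) ^ (k - cls I j) * 2 ^ (cls I j - k) = 1 := by
      rw [← zpow_add₀ (by norm_num)]; simp
    have hpow' : (0 : ℝ) < 2 ^ (cls I j - k) := by positivity
    have e1 : ε / 4 * ((t : ℝ) - s) * 2 ^ (k - cls I j) ≤ I.p j := by linarith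
    have e2 := mul_le_mul_of_nonneg_right e1 hpow'.le
    rw [mul_assoc, hinv, mul_one] at e2
    have e3 : (t : ℝ) - s ≤ 4 * I.p j * 2 ^ (cls I j - k) / ε := by
      rw [le_div_iff₀ hε]; linarith
    linarith
  have hs := Finset.sum_le_sum hterm
  rw [Finset.sum_sub_distrib, Finset.sum_sub_distrib] at hs
  linarith

theorem blk_bound (h1 : ε < 1) {k : ℤ} {s t : ℕ} {b : ℝ} (hst : s ≤ t) (hb : Blk ε I k s b) :
    b - ε / 2 * (t - s) ≤ ∑ l ∈ I.J,
      if start ε I l ≤ t ∧ (t : ℝ) ≤ start ε I l + 7 * I.p l / ε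
      then blocked ε I k l else 0 := by
  have hts : (0 : ℝ) ≤ (t : ℝ) - s := by
    have : (s : ℝ) ≤ t := by exact_mod_cast hst
    linarith
  have hdec : 0 ≤ ε / 2 * ((t : ℝ) - s) := by positivity
  have hnn : ∀ l ∈ I.J, 0 ≤ (if start ε I l ≤ t ∧ (t : ℝ) ≤ start ε I l + 7 * I.p l / ε
      then blocked ε I k l else 0) := by
    intro l _
    have := blocked_nonneg ε I k l
    split_ifs <;> linarith
  by_cases hneg : b - ε / 2 * ((t : ℝ) - s) ≤ 0
  · exact hneg.trans (Finset.sum_nonneg hnn)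
  rw [not_le] at hneg
  rcases hb with rfl | ⟨l, σ, hl, hb1, hb2⟩
  · linarith
  have H := runOK hε I _ _ _ hl
  refine le_trans ?_ (Finset.single_le_sum hnn H.mem)
  rw [start_eq hε I hl, if_pos]
  · linarith [arr_le_blocked hε I hl k]
  refine ⟨H.lt.le.trans hst, ?_⟩
  have e1 : (s : ℝ) ≤ σ + I.p l := by exact_mod_cast H.le
  -- The decay `ε / 2` uses up `3 * p l` within `6 * p l / ε` slots after `s`, and `s` is at most
  -- `p l ≤ p l / ε` slots after the start of `l`.
  have e2 : (t : ℝ) - s ≤ 6 * I.p l / ε := by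
    rw [le_div_iff₀ hε]; linarith
  have e3 : (I.p l : ℝ) ≤ I.p l / ε := by
    rw [le_div_iff₀ hε]
    nlinarith [Nat.cast_nonneg (α := ℝ) (I.p l)]
  have e4 : 7 * (I.p l : ℝ) / ε = 6 * I.p l / ε + I.p l / ε := by ring
  linarith

theorem U_le (h1 : ε < 1) {o : ℕ → Option ℕ}
    (ho : ∀ t j, o t = some j → j ∈ I.J ∧ I.r j ≤ t) (k : ℤ) (t : ℕ) :
    U ε I k t ≤ Y ε I o k t +
      (∑ l ∈ I.J, if start ε I l ≤ t ∧ (t : ℝ) ≤ start ε I l + 7 * I.p l / ε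
        then blocked ε I k l else 0) +
      ∑ j ∈ I.J.filter (fun j => k ≤ cls I j),
        if I.r j ≤ t ∧ (t : ℝ) ≤ I.r j + 4 * I.p j * 2 ^ (cls I j - k) / ε
        then (I.p j : ℝ) else 0 := by
  -- Half of the decay `ε * (t - s)` pays for the blocking and half for the credit.
  obtain ⟨s, hst, b, hb, hle⟩ := workload_bound hε I h1 ho k t
  have e1 := blk_bound hε I h1 hst hb
  have e2 := credit_bound hε I h1 k hst
  have e3 := Q_nonneg hε I k t
  have e4 := mul_nonneg (theta_pos hε).le (Y_nonneg ε I o k t)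
  linarith

end

/-! ### Integration over time -/

section
variable {ε : ℝ} (hε : 0 < ε) (h1 : ε < 1) (I : SInstance)

include h1 in
/-- Even at speed `1 + ε ≤ 2`, a job needs `p j / 2` slots after its release. -/
theorem size_le_flow {o : ℕ → Option ℕ} {C : ℕ → ℕ} (ho : SOffOK I ε o C) {j : ℕ}
    (hj : j ∈ I.J) : (I.p j : ℝ) ≤ 2 * ((C j : ℝ) - I.r j) := by
  obtain ⟨h2, h3⟩ := ho.2 j hj
  have hsub : (Finset.range (C j)).filter (fun t => o t = some j) ⊆
      Finset.Ico (I.r j) (C j) := by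
    intro t ht
    simp only [Finset.mem_filter, Finset.mem_range] at ht
    exact Finset.mem_Ico.2 ⟨(ho.1 t j ht.2).2, ht.1⟩
  have hc := Finset.card_le_card hsub
  rw [Nat.card_Ico] at hc
  have hc' : (((Finset.range (C j)).filter (fun t => o t = some j)).card : ℝ) ≤
      (C j : ℝ) - I.r j := by
    rw [← Nat.cast_sub h2]; exact_mod_cast hc
  have : (0 : ℝ) ≤ ((Finset.range (C j)).filter (fun t => o t = some j)).card :=
    Nat.cast_nonneg _
  nlinarith

include h1 in
theorem volume_le_flow {o : ℕ → Option ℕ} {C : ℕ → ℕ} (ho : SOffOK I ε o C) :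
    ∑ j ∈ I.J, I.w j * I.p j ≤ 2 * ∑ j ∈ I.J, I.w j * ((C j : ℝ) - I.r j) := by
  rw [Finset.mul_sum]
  refine Finset.sum_le_sum fun j hj => ?_
  have := mul_le_mul_of_nonneg_left (size_le_flow h1 I ho hj) (I.hw j hj).le
  linarith

include hε in
theorem rem_eq_zero {o : ℕ → Option ℕ} {C : ℕ → ℕ} (ho : SOffOK I ε o C) {j t : ℕ}
    (hj : j ∈ I.J) (ht : C j ≤ t) : rem ε I o j t = 0 := by
  have h3 := (ho.2 j hj).2
  have hc : (((Finset.range (C j)).filter (fun t => o t = some j)).card : ℝ) ≤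
      ((Finset.range t).filter (fun t => o t = some j)).card := by
    exact_mod_cast Finset.card_le_card (Finset.filter_subset_filter _
      (Finset.range_subset_range.2 ht))
  have := mul_le_mul_of_nonneg_left hc (by linarith : 0 ≤ 1 + ε)
  exact max_eq_left (by linarith)

include hε in
theorem rem_le (o : ℕ → Option ℕ) (j t : ℕ) : rem ε I o j t ≤ I.p j := by
  refine max_le (Nat.cast_nonneg _) ?_
  have : 0 ≤ (1 + ε) * (((Finset.range t).filter (fun u => o u = some j)).card : ℝ) := by
    positivity
  linarith

include hε in
/-- The offline workloads, summed over time and over the density thresholds. -/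
theorem sum_Y_le {o : ℕ → Option ℕ} {C : ℕ → ℕ} (ho : SOffOK I ε o C) (T : ℕ) :
    ∑ k ∈ classes I, (4 : ℝ) ^ k * ∑ t ∈ Finset.range T, Y ε I o k t ≤
      2 * ∑ j ∈ I.J, I.w j * ((C j : ℝ) - I.r j) := by
  simp only [Finset.mul_sum]
  rw [Finset.sum_comm]
  have hpt : ∀ t, ∑ k ∈ classes I, (4 : ℝ) ^ k * Y ε I o k t ≤
      2 * ∑ j ∈ I.J, if I.r j ≤ t ∧ t < C j then I.w j else 0 := by
    intro t
    have h := sum_classes_le I (I.J.filter fun j => I.r j ≤ t) (fun j => rem ε I o j t)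
      fun j _ => rem_nonneg _ _ _ _ _
    simp only [Finset.filter_filter] at h
    refine h.trans ?_
    rw [Finset.sum_filter]
    gcongr with j hj
    have hw := (I.hw j hj).le
    by_cases hr : I.r j ≤ t
    · by_cases hC : t < C j
      · rw [if_pos hr, if_pos ⟨hr, hC⟩]
        refine le_trans ?_ (cls_le hj)
        exact mul_le_mul_of_nonneg_left (rem_le hε I o j t) (by positivity)
      · rw [if_pos hr, rem_eq_zero hε I ho hj (not_lt.1 hC), mul_zero]
        split_ifs <;> linarith
    · rw [if_neg hr]
      split_ifs <;> linarith
  refine (Finset.sum_le_sum fun t _ => hpt t).trans ?_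
  rw [← Finset.mul_sum, Finset.sum_comm, Finset.mul_sum]
  refine Finset.sum_le_sum fun j hj => ?_
  gcongr
  rw [← Finset.sum_filter, Finset.sum_const, nsmul_eq_mul, mul_comm]
  refine mul_le_mul_of_nonneg_left ?_ (I.hw j hj).le
  rw [← Nat.cast_sub (ho.2 j hj).1, ← Nat.card_Ico]
  refine Nat.cast_le.2 (Finset.card_le_card fun t ht => ?_)
  exact Finset.mem_Ico.2 (Finset.mem_filter.1 ht).2

include hε h1

theorem sum_blocked_le (T : ℕ) :
    ∑ k ∈ classes I, (4 : ℝ) ^ k * ∑ t ∈ Finset.range T, ∑ l ∈ I.J,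
      (if start ε I l ≤ t ∧ (t : ℝ) ≤ start ε I l + 7 * I.p l / ε
        then blocked ε I k l else 0) ≤
      16 / ε ^ 2 * ∑ j ∈ I.J, I.w j * I.p j := by
  have e1 : ∀ k ∈ classes I, (4 : ℝ) ^ k * ∑ t ∈ Finset.range T, ∑ l ∈ I.J,
      (if start ε I l ≤ t ∧ (t : ℝ) ≤ start ε I l + 7 * I.p l / ε
        then blocked ε I k l else 0) ≤
      ∑ l ∈ I.J, (7 * I.p l / ε + 1) * ((4 : ℝ) ^ k * blocked ε I k l) := by
    intro k _
    rw [Finset.sum_comm, Finset.mul_sum]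
    refine Finset.sum_le_sum fun l _ => ?_
    have := mul_le_mul_of_nonneg_left (sum_window_le T (start ε I l)
      (L := 7 * I.p l / ε) (by positivity) (blocked_nonneg ε I k l))
      (by positivity : (0 : ℝ) ≤ 4 ^ k)
    linarith
  refine (Finset.sum_le_sum e1).trans ?_
  rw [Finset.sum_comm, Finset.mul_sum]
  refine Finset.sum_le_sum fun l hl => ?_
  rw [← Finset.mul_sum]
  have hp : (1 : ℝ) ≤ I.p l := by exact_mod_cast I.hp l hl
  have e2 : 7 * (I.p l : ℝ) / ε + 1 ≤ 8 * I.p l / ε := by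
    rw [← sub_nonneg]
    have : 8 * (I.p l : ℝ) / ε - (7 * I.p l / ε + 1) = (I.p l - ε) / ε := by
      field_simp; ring
    rw [this]
    exact div_nonneg (by linarith) hε.le
  calc _ ≤ (8 * I.p l / ε) * (2 * (I.w l / ε)) :=
        mul_le_mul e2 (blocked_sum hε I hl)
          (Finset.sum_nonneg fun k _ => mul_nonneg (by positivity) (blocked_nonneg ε I k l))
          (by positivity)
    _ = _ := by field_simp; ring

theorem sum_credit_le (T : ℕ) :
    ∑ k ∈ classes I, (4 : ℝ) ^ k * ∑ t ∈ Finset.range T,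
      ∑ j ∈ I.J.filter (fun j => k ≤ cls I j),
        (if I.r j ≤ t ∧ (t : ℝ) ≤ I.r j + 4 * I.p j * 2 ^ (cls I j - k) / ε
        then (I.p j : ℝ) else 0) ≤
      10 / ε * ∑ j ∈ I.J, I.w j * I.p j := by
  have e1 : ∀ k ∈ classes I, (4 : ℝ) ^ k * ∑ t ∈ Finset.range T,
      ∑ j ∈ I.J.filter (fun j => k ≤ cls I j),
        (if I.r j ≤ t ∧ (t : ℝ) ≤ I.r j + 4 * I.p j * 2 ^ (cls I j - k) / ε
        then (I.p j : ℝ) else 0) ≤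
      ∑ j ∈ I.J.filter (fun j => k ≤ cls I j),
        5 * (I.p j : ℝ) ^ 2 / ε * (4 ^ k * 2 ^ (cls I j - k)) := by
    intro k _
    rw [Finset.sum_comm, Finset.mul_sum]
    refine Finset.sum_le_sum fun j hj => ?_
    obtain ⟨hjJ, hk⟩ := Finset.mem_filter.1 hj
    have hp : (1 : ℝ) ≤ I.p j := by exact_mod_cast I.hp j hjJ
    have hx : (1 : ℝ) ≤ 2 ^ (cls I j - k) := one_le_zpow₀ (by norm_num) (by omega)
    set x : ℝ := 2 ^ (cls I j - k)
    have h4 : (0 : ℝ) < 4 ^ k := by positivity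
    refine (mul_le_mul_of_nonneg_left (sum_window_le T (I.r j)
      (L := 4 * I.p j * x / ε) (by positivity) (by linarith)) h4.le).trans ?_
    have e2 : 4 * (I.p j : ℝ) * x / ε + 1 ≤ 5 * I.p j * x / ε := by
      rw [← sub_nonneg]
      have : 5 * (I.p j : ℝ) * x / ε - (4 * I.p j * x / ε + 1) = (I.p j * x - ε) / ε := by
        field_simp; ring
      rw [this]
      exact div_nonneg (by nlinarith) hε.le
    calc _ ≤ (4 : ℝ) ^ k * (5 * I.p j * x / ε * I.p j) := by gcongr
      _ = _ := by ring
  refine (Finset.sum_le_sum e1).trans ?_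
  rw [sum_swap I I.J fun k j => 5 * (I.p j : ℝ) ^ 2 / ε * (4 ^ k * 2 ^ (cls I j - k)),
    Finset.mul_sum]
  refine Finset.sum_le_sum fun j hj => ?_
  rw [← Finset.mul_sum]
  refine (mul_le_mul_of_nonneg_left (geom_below (classes I) (cls I j))
    (by positivity)).trans ?_
  have := mul_le_mul_of_nonneg_left (cls_le hj)
    (by positivity : 0 ≤ 10 / ε * (I.p j : ℝ))
  calc _ = 10 / ε * (I.p j : ℝ) * (4 ^ cls I j * I.p j) := by ring
    _ ≤ _ := this
    _ = _ := by ring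

/-- The total weight of the waiting jobs, summed over time. -/
theorem sum_waiting_le {o : ℕ → Option ℕ} {C : ℕ → ℕ} (ho : SOffOK I ε o C) (T : ℕ) :
    ∑ t ∈ Finset.range T,
      ∑ j ∈ I.J.filter (fun j => I.r j ≤ t ∧ ¬ Rej1 ε I j ∧ j ∉ (st ε I t).1), I.w j ≤
      4 * (2 * ∑ j ∈ I.J, I.w j * ((C j : ℝ) - I.r j) +
        16 / ε ^ 2 * ∑ j ∈ I.J, I.w j * I.p j + 10 / ε * ∑ j ∈ I.J, I.w j * I.p j) := by
  have e1 : ∀ t ∈ Finset.range T,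
      ∑ j ∈ I.J.filter (fun j => I.r j ≤ t ∧ ¬ Rej1 ε I j ∧ j ∉ (st ε I t).1), I.w j ≤
      4 * ∑ k ∈ classes I, (4 : ℝ) ^ k * U ε I k t := by
    intro t _
    have h := le_sum_classes I
      (I.J.filter (fun j => I.r j ≤ t ∧ ¬ Rej1 ε I j ∧ j ∉ (st ε I t).1))
      (Finset.filter_subset _ _) (fun j => (I.p j : ℝ)) fun j _ => Nat.cast_nonneg _
    have hU : ∀ k, ∑ j ∈ (I.J.filter (fun j => I.r j ≤ t ∧ ¬ Rej1 ε I j ∧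
        j ∉ (st ε I t).1)).filter (fun j => k ≤ cls I j), (I.p j : ℝ) = U ε I k t := by
      intro k
      unfold U
      rw [Finset.filter_filter]
      refine Finset.sum_congr (Finset.filter_congr fun j _ => ?_) fun _ _ => rfl
      tauto
    simp only [hU] at h
    refine le_trans ?_ (mul_le_mul_of_nonneg_left h (by norm_num : (0 : ℝ) ≤ 4))
    rw [Finset.mul_sum]
    exact Finset.sum_le_sum fun j hj => le_four_cls (Finset.mem_filter.1 hj).1
  refine (Finset.sum_le_sum e1).trans ?_
  rw [← Finset.mul_sum, Finset.sum_comm]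
  refine mul_le_mul_of_nonneg_left ?_ (by norm_num)
  have e2 : ∀ k ∈ classes I, ∑ t ∈ Finset.range T, (4 : ℝ) ^ k * U ε I k t ≤
      4 ^ k * ∑ t ∈ Finset.range T, Y ε I o k t +
      4 ^ k * (∑ t ∈ Finset.range T, ∑ l ∈ I.J,
        (if start ε I l ≤ t ∧ (t : ℝ) ≤ start ε I l + 7 * I.p l / ε
        then blocked ε I k l else 0)) +
      4 ^ k * ∑ t ∈ Finset.range T, ∑ j ∈ I.J.filter (fun j => k ≤ cls I j),
        (if I.r j ≤ t ∧ (t : ℝ) ≤ I.r j + 4 * I.p j * 2 ^ (cls I j - k) / ε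
        then (I.p j : ℝ) else 0) := by
    intro k _
    rw [← Finset.mul_sum, ← mul_add, ← mul_add, ← Finset.sum_add_distrib,
      ← Finset.sum_add_distrib]
    gcongr with t _
    exact U_le hε I h1 ho.1 k t
  refine (Finset.sum_le_sum e2).trans ?_
  rw [Finset.sum_add_distrib, Finset.sum_add_distrib]
  have s1 := sum_Y_le hε I ho T
  have s2 := sum_blocked_le hε h1 I T
  have s3 := sum_credit_le hε h1 I T
  linarith

end

/-! ### Jobs that are not rejected -/

section
variable {ε : ℝ} (hε : 0 < ε) (I : SInstance)
include hε

/-- Every job that is retained on arrival is started: once all jobs are released, each busy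
slot removes a unit of workload, and the machine does not idle while a job waits. -/
theorem eventually_started {j : ℕ} (hj : j ∈ I.J) (hr : ¬ Rej1 ε I j) :
    ∃ t, j ∈ (st ε I t).1 := by
  by_contra! hno
  obtain ⟨i₀, -, hmin⟩ := Finset.exists_min_image I.J (cls I) ⟨j, hj⟩
  obtain ⟨M, hM⟩ : ∃ M, ∀ i ∈ I.J, I.r i ≤ M :=
    ⟨∑ i ∈ I.J, I.r i, fun i hi => Finset.single_le_sum (fun _ _ => Nat.zero_le _) hi⟩
  have hdec : ∀ m : ℕ, U ε I (cls I i₀) (M + m) + Q ε I (cls I i₀) (M + m) ≤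
      U ε I (cls I i₀) M + Q ε I (cls I i₀) M - m := by
    intro m
    induction m with
    | zero => simp
    | succ m ih =>
      have hbusy : ∃ x, (st ε I (M + m + 1)).2 = some x := by
        rcases step_cases' hε I (M + m) with ⟨i, σ, h1, -, -, h4⟩ |
          ⟨-, ⟨i, -, -, -, -, -, h5⟩ | ⟨h1, -⟩⟩
        · exact ⟨_, by rw [h4, h1]⟩
        · exact ⟨_, by rw [h5]⟩
        · exact absurd (h1 j hj ((hM j hj).trans (Nat.le_add_right _ _)) hr) (hno _)
      obtain ⟨⟨i, σ⟩, hi⟩ := hbusy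
      have hw := workload_succ hε I hi (hmin i (runOK hε I _ _ _ hi).mem)
      have hz : ret ε I (cls I i₀) (M + m + 1) = 0 := by
        unfold ret
        rw [Finset.filter_false_of_mem, Finset.sum_empty]
        intro i hi
        have := hM i hi
        omega
      rw [hz] at hw
      push_cast
      rw [← add_assoc M m 1]
      linarith
  obtain ⟨m, hm⟩ := exists_nat_gt (U ε I (cls I i₀) M + Q ε I (cls I i₀) M)
  have hU : 0 ≤ U ε I (cls I i₀) (M + m) := Finset.sum_nonneg fun _ _ => Nat.cast_nonneg _
  have := Q_nonneg hε I (cls I i₀) (M + m)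
  linarith [hdec m]

theorem rejAt_of_outweighed {j t σ : ℕ} (h : (st ε I t).2 = some (j, σ)) (ht : t < σ + I.p j)
    (hw : I.w j / ε < ∑ i ∈ I.J.filter (fun i => σ < I.r i ∧ I.r i ≤ t), I.w i) :
    RejAt ε I j t := by
  have H := runOK hε I _ _ _ h
  have hj : j ∈ I.J ∧ I.r j ≤ t := ⟨H.mem, H.rel.trans H.lt.le⟩
  exact Or.inr ⟨σ, h, by rwa [trunc_p hj], by rwa [trunc_w hj, trunc_sum]⟩

omit hε in
theorem rejAt_of_rej1 {j : ℕ} (hj : j ∈ I.J) (h : Rej1 ε I j) : RejAt ε I j (I.r j) :=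
  Or.inl ⟨mem_trunc.2 ⟨hj, le_rfl⟩, trunc_r ⟨hj, le_rfl⟩, (trunc_rej1 ⟨hj, le_rfl⟩).2 h⟩

omit hε in
theorem not_mem_SRej {j : ℕ} (hj : j ∈ I.J) :
    j ∉ SRej I (alg ε I) ↔ ∀ s, ¬ RejAt ε I j s := by
  unfold SRej alg
  rw [Finset.mem_filter]
  by_cases h : ∃ s, RejAt ε I j s
  · simp only [h, dite_true]
    simp [hj, h]
  · simp only [h, dite_false]
    simpa using h

/-- A job that is never rejected runs from its start until it is finished. -/
theorem runs {j S : ℕ} (hn : ∀ s, ¬ RejAt ε I j s) (hS : (st ε I (S + 1)).2 = some (j, S))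
    (m : ℕ) (hm : m < I.p j) : (st ε I (S + m + 1)).2 = some (j, S) := by
  induction m with
  | zero => exact hS
  | succ m ih =>
    have h := ih (by omega)
    rcases step_cases' hε I (S + m + 1) with ⟨i, σ, -, -, -, h4⟩ | ⟨hw, -⟩
    · rw [← add_assoc S m 1, h4, h]
    · exact absurd (rejAt_of_outweighed hε I h (by omega) (hw j S h (by omega))) (hn _)

theorem start_spec {j : ℕ} (hj : j ∈ I.J) (hn : ∀ s, ¬ RejAt ε I j s) :
    (st ε I (start ε I j + 1)).2 = some (j, start ε I j) := by
  obtain ⟨t, ht⟩ := eventually_started hε I hj fun h => hn _ (rejAt_of_rej1 I hj h)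
  obtain ⟨σ, -, hσ⟩ := exists_start hε I ht
  rw [start_eq hε I hσ, hσ]

theorem sched_iff {j : ℕ} (hj : j ∈ I.J) (hn : ∀ s, ¬ RejAt ε I j s) (u : ℕ) :
    (alg ε I).sched u = some j ↔ start ε I j ≤ u ∧ u < start ε I j + I.p j := by
  have hS := start_spec hε I hj hn
  simp only [alg, Option.map_eq_some_iff, Prod.exists, exists_and_right, exists_eq_right]
  constructor
  · rintro ⟨σ, hσ⟩
    have H := runOK hε I _ _ _ hσ
    rw [start_eq hε I hσ]
    have := H.lt
    have := H.le
    omega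
  · rintro ⟨h1, h2⟩
    have h := runs hε I hn hS (u - start ε I j) (by omega)
    rw [Nat.add_sub_of_le h1] at h
    exact ⟨_, h⟩

/-- Until its start, a job that is never rejected is waiting; its weight is thus charged in
every slot of its waiting time. -/
theorem flow_le (h1 : ε < 1) {o : ℕ → Option ℕ} {C : ℕ → ℕ} (ho : SOffOK I ε o C) :
    ∑ j ∈ I.J \ SRej I (alg ε I), I.w j * (((start ε I j + I.p j : ℕ) : ℝ) - I.r j) ≤
      300 / ε ^ 2 * ∑ j ∈ I.J, I.w j * ((C j : ℝ) - I.r j) := by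
  set A := I.J \ SRej I (alg ε I)
  have hA : ∀ j ∈ A, j ∈ I.J ∧ ∀ s, ¬ RejAt ε I j s := by
    intro j hj
    obtain ⟨a, b⟩ := Finset.mem_sdiff.1 hj
    exact ⟨a, (not_mem_SRej I a).1 b⟩
  obtain ⟨T, hT⟩ : ∃ T, ∀ j ∈ A, start ε I j ≤ T :=
    ⟨∑ j ∈ A, start ε I j, fun i hi =>
      Finset.single_le_sum (f := start ε I) (fun _ _ => Nat.zero_le _) hi⟩
  have hwait := sum_waiting_le hε h1 I ho T
  have hvol := volume_le_flow h1 I ho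
  set F := ∑ j ∈ I.J, I.w j * ((C j : ℝ) - I.r j)
  set W := ∑ j ∈ I.J, I.w j * I.p j with hW
  have hW0 : 0 ≤ W := Finset.sum_nonneg fun j hj =>
    mul_nonneg (I.hw j hj).le (Nat.cast_nonneg _)
  have e1 : ∀ j ∈ A, I.w j * (((start ε I j + I.p j : ℕ) : ℝ) - I.r j) =
      I.w j * I.p j + ∑ t ∈ Finset.range T,
        if I.r j ≤ t ∧ t < start ε I j then I.w j else 0 := by
    intro j hj
    have H := runOK hε I _ _ _ (start_spec hε I (hA j hj).1 (hA j hj).2)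
    have hf : (Finset.range T).filter (fun t => I.r j ≤ t ∧ t < start ε I j) =
        Finset.Ico (I.r j) (start ε I j) := by
      ext t
      have := hT j hj
      simp only [Finset.mem_filter, Finset.mem_range, Finset.mem_Ico]
      omega
    rw [← Finset.sum_filter, hf, Finset.sum_const, Nat.card_Ico, nsmul_eq_mul,
      Nat.cast_sub H.rel]
    push_cast
    ring
  have e2 : ∑ j ∈ A, ∑ t ∈ Finset.range T,
      (if I.r j ≤ t ∧ t < start ε I j then I.w j else 0) ≤
      ∑ t ∈ Finset.range T,
      ∑ j ∈ I.J.filter (fun j => I.r j ≤ t ∧ ¬ Rej1 ε I j ∧ j ∉ (st ε I t).1), I.w j := by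
    rw [Finset.sum_comm]
    refine Finset.sum_le_sum fun t _ => ?_
    rw [← Finset.sum_filter]
    refine Finset.sum_le_sum_of_subset_of_nonneg (fun j hj => ?_) fun j hj _ =>
      (I.hw j (Finset.mem_filter.1 hj).1).le
    obtain ⟨hj, hr, ht⟩ := Finset.mem_filter.1 hj
    have H := runOK hε I _ _ _ (start_spec hε I (hA j hj).1 (hA j hj).2)
    exact Finset.mem_filter.2 ⟨(hA j hj).1, hr, H.nrej,
      fun hD => H.notD (started_mono hε I ht.le hD)⟩
  have e3 : ∑ j ∈ A, I.w j * I.p j ≤ W :=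
    Finset.sum_le_sum_of_subset_of_nonneg Finset.sdiff_subset fun j hj _ =>
      mul_nonneg (I.hw j hj).le (Nat.cast_nonneg _)
  rw [Finset.sum_congr rfl e1, Finset.sum_add_distrib]
  have hx : 1 ≤ 1 / ε := by rw [le_div_iff₀ hε]; linarith
  have hF0 : 0 ≤ F := by linarith
  have a1 : 10 / ε * W = 10 * (1 / ε) * W := by ring
  have a2 : 16 / ε ^ 2 * W = 16 * (1 / ε) ^ 2 * W := by rw [one_div_pow]; ring
  have a3 : 300 / ε ^ 2 * F = 300 * (1 / ε) ^ 2 * F := by rw [one_div_pow]; ring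
  rw [a1, a2] at hwait
  rw [a3]
  set x := 1 / ε
  have b1 : x ≤ x ^ 2 := by nlinarith
  have b2 : 1 ≤ x ^ 2 := by nlinarith
  have c1 : x * W ≤ x ^ 2 * (2 * F) := by
    calc x * W ≤ x ^ 2 * W := by gcongr
      _ ≤ _ := by gcongr
  have c2 : x ^ 2 * W ≤ x ^ 2 * (2 * F) := by gcongr
  have c3 : F ≤ x ^ 2 * F := by nlinarith
  linarith

/-! ### The rejected weight -/

/-- In each class the volume rejected on arrival is at most a `theta ε` fraction, and the
densities within a class differ by a factor of at most `4`. -/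
theorem rej1_weight : ∑ j ∈ I.J.filter (fun j => Rej1 ε I j), I.w j ≤
    8 * ε * ∑ j ∈ I.J, I.w j := by
  have hmaps : ∀ j ∈ I.J, cls I j ∈ classes I := fun j hj => Finset.mem_image_of_mem _ hj
  rw [Finset.sum_filter, ← Finset.sum_fiberwise_of_maps_to hmaps,
    ← Finset.sum_fiberwise_of_maps_to hmaps I.w, Finset.mul_sum]
  refine Finset.sum_le_sum fun k _ => ?_
  have hl : Lower I k (I.J.filter fun j => cls I j = k) := by
    intro a ha
    obtain ⟨ha, hk⟩ := Finset.mem_filter.1 ha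
    refine ⟨ha, hk, fun i hi => ?_⟩
    have hi := mem_pred.1 hi
    exact Finset.mem_filter.2 ⟨hi.1, hi.2.1.trans hk⟩
  have hc := cred_sum_nonneg hε I hl
  unfold cred at hc
  rw [Finset.sum_sub_distrib, ← Finset.mul_sum] at hc
  set A := I.J.filter fun j => cls I j = k
  have h4 : (0 : ℝ) < 4 ^ k := by positivity
  have hA : ∀ j ∈ A, j ∈ I.J ∧ cls I j = k := fun j hj => Finset.mem_filter.1 hj
  have e1 : ∑ j ∈ A, (if Rej1 ε I j then I.w j else 0) ≤
      4 * 4 ^ k * ∑ j ∈ A, if Rej1 ε I j then (I.p j : ℝ) else 0 := by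
    rw [Finset.mul_sum]
    refine Finset.sum_le_sum fun j hj => ?_
    split_ifs
    · have := le_four_cls (hA j hj).1
      rw [(hA j hj).2] at this
      linarith
    · simp
  have e2 : 4 ^ k * ∑ j ∈ A, (I.p j : ℝ) ≤ ∑ j ∈ A, I.w j := by
    rw [Finset.mul_sum]
    refine Finset.sum_le_sum fun j hj => ?_
    have := cls_le (hA j hj).1
    rwa [(hA j hj).2] at this
  have e3 := mul_le_mul_of_nonneg_left hc h4.le
  have e4 : theta ε * (4 ^ k * ∑ j ∈ A, (I.p j : ℝ)) ≤ 2 * ε * ∑ j ∈ A, I.w j :=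
    mul_le_mul (theta_le hε) e2
      (mul_nonneg h4.le (Finset.sum_nonneg fun _ _ => Nat.cast_nonneg _)) (by linarith)
  linarith

/-- An interrupted job is charged to the jobs released while it ran; each job is charged at
most once. -/
theorem interrupted_weight :
    ∑ j ∈ I.J.filter (fun j => ∃ s, RejAt ε I j s ∧ ¬ Rej1 ε I j), I.w j ≤
      ε * ∑ j ∈ I.J, I.w j := by
  set B := I.J.filter (fun j => ∃ s, RejAt ε I j s ∧ ¬ Rej1 ε I j)
  have e1 : ∀ j ∈ B, I.w j ≤
      ε * ∑ i ∈ I.J, if (∃ σ, (st ε I (I.r i)).2 = some (j, σ)) then I.w i else 0 := by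
    intro j hj
    obtain ⟨hjJ, s, hs, hr⟩ := Finset.mem_filter.1 hj
    rcases hs with ⟨hm, -, hs⟩ | ⟨σ, h, -, hw⟩
    · exact absurd ((trunc_rej1 (mem_trunc.1 hm)).1 hs) hr
    have H := runOK hε I _ _ _ h
    rw [trunc_w ⟨hjJ, H.rel.trans H.lt.le⟩, trunc_sum, div_lt_iff₀ hε] at hw
    refine hw.le.trans ?_
    rw [mul_comm, ← Finset.sum_filter]
    refine mul_le_mul_of_nonneg_left ?_ hε.le
    refine Finset.sum_le_sum_of_subset_of_nonneg (fun i hi => ?_) fun i hi _ =>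
      (I.hw i (Finset.mem_filter.1 hi).1).le
    obtain ⟨hi, h1, h2⟩ := Finset.mem_filter.1 hi
    exact Finset.mem_filter.2 ⟨hi, σ, H.prev _ h1 h2⟩
  refine (Finset.sum_le_sum e1).trans ?_
  rw [← Finset.mul_sum, Finset.sum_comm]
  refine mul_le_mul_of_nonneg_left (Finset.sum_le_sum fun i hi => ?_) hε.le
  rw [← Finset.sum_filter, Finset.sum_const, nsmul_eq_mul]
  have hc : (B.filter fun j => ∃ σ, (st ε I (I.r i)).2 = some (j, σ)).card ≤ 1 := by
    rw [Finset.card_le_one]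
    intro a ha b hb
    obtain ⟨-, σ, hσ⟩ := Finset.mem_filter.1 ha
    obtain ⟨-, τ, hτ⟩ := Finset.mem_filter.1 hb
    rw [hσ] at hτ
    simp only [Option.some.injEq, Prod.mk.injEq] at hτ
    exact hτ.1
  have hc' : ((B.filter fun j => ∃ σ, (st ε I (I.r i)).2 = some (j, σ)).card : ℝ) ≤ 1 := by
    exact_mod_cast hc
  nlinarith [I.hw i hi]

theorem rejected_weight :
    ∑ j ∈ SRej I (alg ε I), I.w j ≤ 9 * ε * ∑ j ∈ I.J, I.w j := by
  have hsub : SRej I (alg ε I) ⊆ I.J.filter (fun j => Rej1 ε I j) ∪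
      I.J.filter (fun j => ∃ s, RejAt ε I j s ∧ ¬ Rej1 ε I j) := by
    intro j hj
    have hjJ : j ∈ I.J := (Finset.mem_filter.1 hj).1
    have hn : ¬ ∀ s, ¬ RejAt ε I j s := fun h => (not_mem_SRej I hjJ).2 h hj
    push Not at hn
    obtain ⟨s, hs⟩ := hn
    rw [Finset.mem_union, Finset.mem_filter, Finset.mem_filter]
    by_cases hr : Rej1 ε I j
    · exact Or.inl ⟨hjJ, hr⟩
    · exact Or.inr ⟨hjJ, s, hs, hr⟩
  have hpos : ∀ j ∈ I.J, 0 ≤ I.w j := fun j hj => (I.hw j hj).le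
  have hdisj : Disjoint (I.J.filter (fun j => Rej1 ε I j))
      (I.J.filter (fun j => ∃ s, RejAt ε I j s ∧ ¬ Rej1 ε I j)) := by
    rw [Finset.disjoint_filter]
    rintro j - h ⟨s, -, h'⟩
    exact h' h
  have h := Finset.sum_le_sum_of_subset_of_nonneg (f := I.w) hsub fun j hj _ => by
    rcases Finset.mem_union.1 hj with hj | hj <;> exact hpos j (Finset.mem_filter.1 hj).1
  rw [Finset.sum_union hdisj] at h
  linarith [rej1_weight hε I, interrupted_weight hε I]

/-! ### The output is well formed -/

theorem sched_sound {t j : ℕ} (h : (alg ε I).sched t = some j) : j ∈ I.J ∧ I.r j ≤ t := by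
  simp only [alg, Option.map_eq_some_iff, Prod.exists, exists_and_right, exists_eq_right] at h
  obtain ⟨σ, hσ⟩ := h
  have H := runOK hε I _ _ _ hσ
  have := H.rel
  have := H.lt
  exact ⟨H.mem, by omega⟩

theorem rej_sound {j s : ℕ} (h : (alg ε I).rej j = some s) : j ∈ I.J ∧ I.r j ≤ s := by
  rcases (rej_eq_some.1 h).1 with ⟨hm, -, -⟩ | ⟨σ, hσ, -, -⟩
  · exact mem_trunc.1 hm
  · have H := runOK hε I _ _ _ hσ
    exact ⟨H.mem, H.rel.trans H.lt.le⟩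

end

end Algorithm

/-- For every `ε` with `0 < ε`, `ε² ≤ 1/2` and `1/ε` a positive
integer, there are a constant `c > 0` and a deterministic online algorithm for
scheduling jobs on a single machine which, on every instance `J`, rejects a set `R`
of jobs of total weight at most `c·ε·∑_{j∈J} w_j`, schedules every job of `J ∖ R`
non-preemptively (job `j` being processed in `p j` consecutive slots, starting no
earlier than `r j` and ending at its completion time `C j`), and has total weighted
flow-time `∑_{j∉R} w_j·(C_j − r_j)` at most `(c/ε²)·F*`, where `F*` is the minimum
total weighted flow-time of any offline preemptive schedule completing all jobs of
`J` on a machine of speed `1 + ε` (stated for every such offline schedule, hence for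
the optimal one). -/
theorem single_machine_rejection_theorem :
    ∃ c : ℝ, 0 < c ∧
      ∀ ε : ℝ, 0 < ε → ε ^ 2 ≤ 1 / 2 → (∃ k : ℕ, 0 < k ∧ (k : ℝ) = 1 / ε) →
      ∃ Alg : SInstance → SOutput, SOnline Alg ∧
        ∀ I : SInstance,
          (∀ t j, (Alg I).sched t = some j → j ∈ I.J ∧ I.r j ≤ t) ∧
          (∀ j s, (Alg I).rej j = some s → j ∈ I.J ∧ I.r j ≤ s) ∧
          (∑ j ∈ SRej I (Alg I), I.w j ≤ c * ε * ∑ j ∈ I.J, I.w j) ∧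
          ∃ C : ℕ → ℕ,
            (∀ j ∈ I.J \ SRej I (Alg I),
              I.r j + I.p j ≤ C j ∧
              (∀ u, (Alg I).sched u = some j ↔ C j - I.p j ≤ u ∧ u < C j)) ∧
            ∀ osched : ℕ → Option ℕ, ∀ C' : ℕ → ℕ, SOffOK I ε osched C' →
              ∑ j ∈ I.J \ SRej I (Alg I), I.w j * ((C j : ℝ) - (I.r j : ℝ)) ≤
                (c / ε ^ 2) * ∑ j ∈ I.J, I.w j * ((C' j : ℝ) - (I.r j : ℝ)) := by
  refine ⟨300, by norm_num, fun ε hε hε2 _ => ⟨alg ε, alg_online ε, fun I => ?_⟩⟩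
  have h1 : ε < 1 := by nlinarith
  refine ⟨fun t j h => sched_sound hε I h, fun j s h => rej_sound hε I h, ?_,
    fun j => start ε I j + I.p j, fun j hj => ?_, fun o C ho => flow_le hε I h1 ho⟩
  · refine (rejected_weight hε I).trans ?_
    have := mul_nonneg hε.le (Finset.sum_nonneg fun j hj => (I.hw j hj).le)
    linarith
  · obtain ⟨hjJ, hn⟩ := Finset.mem_sdiff.1 hj
    have hn := (not_mem_SRej I hjJ).1 hn
    have := (runOK hε I _ _ _ (start_spec hε I hjJ hn)).rel
    refine ⟨Nat.add_le_add_right this _, fun u => ?_⟩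
    rw [sched_iff hε I hjJ hn, Nat.add_sub_cancel]

end NPSched
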